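/- Assume p_1,…,p_m are positive rational numbers. Let 𝒮 ⊆ ℝ^{D_1}, with D_1 = ∑_{i,j} |𝒜_{ij}| d_i n_j, be the set of matrix tuples V with (V,p) feasible. Then there exists a semi-algebraic set 𝒴 ⊆ ℝ^{D_1} × ℝ^{D_1} such that for every (V, V') ∈ 𝒴 one has cap(V, p) = cap(V', p) and (V', p) is extremizable, and such that 𝒮 = π_1(𝒴), where π_1 : ℝ^{D_1} × ℝ^{D_1} → ℝ^{D_1} is projection onto the first factor. -/

import Mathlib

open Matrix BigOperators

/-- The value of the capacity functional of a quiver datum `(V, p)` at a tuple `Y`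
of `n j × n j` matrices. -/
noncomputable def capVal {k m : ℕ} {d : Fin k → ℕ} {n : Fin m → ℕ} {A : Fin k → Fin m → ℕ}
    (p : Fin m → ℝ)
    (V : ∀ i : Fin k, ∀ j : Fin m, Fin (A i j) → Matrix (Fin (n j)) (Fin (d i)) ℝ)
    (Y : ∀ j : Fin m, Matrix (Fin (n j)) (Fin (n j)) ℝ) : ℝ :=
  (∏ i : Fin k, (∑ j : Fin m, p j • ∑ a : Fin (A i j), (V i j a)ᵀ * Y j * V i j a).det) /
    ∏ j : Fin m, (Y j).det ^ (p j)

/-- The capacity `cap(V, p)` of a quiver datum: the infimum of the capacity functional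
over all tuples of positive definite matrices. -/
noncomputable def cap {k m : ℕ} {d : Fin k → ℕ} {n : Fin m → ℕ} {A : Fin k → Fin m → ℕ}
    (p : Fin m → ℝ)
    (V : ∀ i : Fin k, ∀ j : Fin m, Fin (A i j) → Matrix (Fin (n j)) (Fin (d i)) ℝ) : ℝ :=
  sInf { r : ℝ | ∃ Y : ∀ j : Fin m, Matrix (Fin (n j)) (Fin (n j)) ℝ,
    (∀ j, (Y j).PosDef) ∧ r = capVal p V Y }

/-- A quiver datum `(V, p)` is extremizable if it is feasible (`cap(V,p) > 0`) and the
infimum defining the capacity is attained at some tuple of positive definite matrices. -/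
def Extremizable {k m : ℕ} {d : Fin k → ℕ} {n : Fin m → ℕ} {A : Fin k → Fin m → ℕ}
    (p : Fin m → ℝ)
    (V : ∀ i : Fin k, ∀ j : Fin m, Fin (A i j) → Matrix (Fin (n j)) (Fin (d i)) ℝ) : Prop :=
  0 < cap p V ∧ ∃ Y : ∀ j : Fin m, Matrix (Fin (n j)) (Fin (n j)) ℝ,
    (∀ j, (Y j).PosDef) ∧ capVal p V Y = cap p V

/-- A quiver datum `(V, p)` is geometric. -/
def IsGeometric {k m : ℕ} {d : Fin k → ℕ} {n : Fin m → ℕ} {A : Fin k → Fin m → ℕ}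
    (p : Fin m → ℝ)
    (V : ∀ i : Fin k, ∀ j : Fin m, Fin (A i j) → Matrix (Fin (n j)) (Fin (d i)) ℝ) : Prop :=
  (∀ i, ∑ j : Fin m, p j • ∑ a : Fin (A i j), (V i j a)ᵀ * V i j a = 1) ∧
  (∀ j, ∑ i : Fin k, ∑ a : Fin (A i j), V i j a * (V i j a)ᵀ = 1)

/-- The index set of coordinates on the space `ℝ^{D₁}` of matrix tuples,
`D₁ = ∑_{i,j} |𝒜_{ij}| d_i n_j`. -/
abbrev QIdx (k m : ℕ) (d : Fin k → ℕ) (n : Fin m → ℕ) (A : Fin k → Fin m → ℕ) : Type :=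
  (i : Fin k) × (j : Fin m) × (Fin (A i j) × Fin (n j) × Fin (d i))

/-- Reassemble a point of `ℝ^{D₁}` into a tuple of matrices (a quiver datum). -/
def toDatum {k m : ℕ} {d : Fin k → ℕ} {n : Fin m → ℕ} {A : Fin k → Fin m → ℕ}
    (x : QIdx k m d n A → ℝ) :
    ∀ i : Fin k, ∀ j : Fin m, Fin (A i j) → Matrix (Fin (n j)) (Fin (d i)) ℝ :=
  fun i j a => Matrix.of fun r c => x ⟨i, j, a, r, c⟩

/-- A subset of `ℝ^ι` (`ι` finite) is semi-algebraic if it is a finite union of sets, each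
defined by finitely many polynomial equalities and finitely many strict polynomial
inequalities. -/
def IsSemialgebraic {ι : Type} [Fintype ι] (S : Set (ι → ℝ)) : Prop :=
  ∃ (N M : ℕ) (P : Fin N → Fin M → MvPolynomial ι ℝ) (isEq : Fin N → Fin M → Bool),
    S = ⋃ t : Fin N, { x | ∀ l : Fin M,
      if isEq t l then MvPolynomial.eval x (P t l) = 0
      else 0 < MvPolynomial.eval x (P t l) }

theorem ts_move_aux (a b u v : ℝ) (h1 : a < u) (h2 : u ≤ v) (h3 : v < b) :
    ∃ ψ : ℝ ≃o ℝ, ψ u = v ∧ ∀ t, t ≤ a ∨ b ≤ t → ψ t = t := by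
  set f : ℝ → ℝ := fun t => max t (min (a + (t-a)*((v-a)/(u-a))) (b - (b-t)*((b-v)/(b-u)))) with hf
  have s1 : 1 ≤ (v-a)/(u-a) := by rw [le_div_iff₀ (by linarith)]; linarith
  have s2 : 0 < (b-v)/(b-u) := by apply div_pos <;> linarith
  have s3 : (b-v)/(b-u) ≤ 1 := by rw [div_le_one (by linarith)]; linarith
  have hm : StrictMono f := by
    intro x y hxy
    apply max_lt_max hxy
    apply min_lt_min
    · nlinarith
    · nlinarith
  have hout : ∀ t, t ≤ a ∨ b ≤ t → f t = t := by
    rintro t (h | h)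
    · apply max_eq_left; apply min_le_of_left_le; nlinarith
    · apply max_eq_left; apply min_le_of_right_le; nlinarith
  have hc : Continuous f := by fun_prop
  have hs : Function.Surjective f := by
    apply hc.surjective
    · apply Filter.tendsto_atTop_mono (fun t => le_max_left _ _) Filter.tendsto_id
    · apply Filter.tendsto_id.congr'
      filter_upwards [Filter.eventually_le_atBot a] with t ht
      exact (hout t (Or.inl ht)).symm
  refine ⟨hm.orderIsoOfSurjective f hs, ?_, ?_⟩
  · show f u = v
    have e1 : a + (u-a)*((v-a)/(u-a)) = v := by
      rw [mul_div_cancel₀]; ring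
      linarith
    have e2 : b - (b-u)*((b-v)/(b-u)) = v := by
      rw [mul_div_cancel₀]; ring
      linarith
    simp only [hf]
    rw [e1, e2]; simp [h2]
  · exact hout

theorem ts_move (a b u v : ℝ) (h1 : a < u) (h2 : u < b) (h3 : a < v) (h4 : v < b) :
    ∃ ψ : ℝ ≃o ℝ, ψ u = v ∧ ∀ t, t ≤ a ∨ b ≤ t → ψ t = t := by
  rcases le_total u v with h | h
  · exact ts_move_aux a b u v h1 h h4
  · obtain ⟨ψ, e, o⟩ := ts_move_aux a b v u h3 h h2
    refine ⟨ψ.symm, by rw [← e]; simp, fun t ht => ?_⟩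
    conv_lhs => rw [← o t ht]
    simp

section tarski
open Polynomial
theorem ts_atTop (h : ℝ[X]) (hd : 0 < h.natDegree) (K : ℝ) :
    ∃ s, K < s ∧ 0 < h.eval s * h.derivative.eval s := by
  have h0 : h ≠ 0 := by rintro rfl; simp at hd
  have hl : (h * derivative h).leadingCoeff = h.natDegree * h.leadingCoeff ^ 2 := by
    rw [leadingCoeff_mul, leadingCoeff_derivative]; ring
  have hlp : 0 < (h * derivative h).leadingCoeff := by
    rw [hl]
    have := leadingCoeff_ne_zero.2 h0
    positivity
  have hne : h * derivative h ≠ 0 := by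
    intro h; simp [h] at hlp
  have hd0 : derivative h ≠ 0 := right_ne_zero_of_mul hne
  have : 0 < (h * derivative h).degree := by
    rw [← natDegree_pos_iff_degree_pos, natDegree_mul h0 hd0]; omega
  have := (h * derivative h).tendsto_atTop_of_leadingCoeff_nonneg this hlp.le
  obtain ⟨s, hs1, hs2⟩ := ((this.eventually_gt_atTop 0).and (Filter.eventually_gt_atTop K)).exists
  exact ⟨s, hs2, by simpa using hs1⟩

theorem ts_atBot (h : ℝ[X]) (hd : 0 < h.natDegree) (K : ℝ) :
    ∃ s, s < K ∧ h.eval s * h.derivative.eval s < 0 := by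
  obtain ⟨s, h1, h2⟩ := ts_atTop (h.comp (-X)) (by rw [natDegree_comp]; simpa) (-K)
  refine ⟨-s, by linarith, ?_⟩
  simp [derivative_comp] at h2
  linarith

theorem ts_const (g : ℝ[X]) (a b : ℝ) (hab : a ≤ b) (hn : ∀ u ∈ Set.Icc a b, g.eval u ≠ 0) :
    0 < g.eval a * g.eval b := by
  by_contra hc
  have ha := hn a ⟨le_rfl, hab⟩
  have hb := hn b ⟨hab, le_rfl⟩
  have hcont : ContinuousOn (fun u => g.eval u) (Set.Icc a b) := by fun_prop
  have hcont' : ContinuousOn (fun u => g.eval u) (Set.uIcc a b) := by fun_prop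
  have h0 : (0:ℝ) ∈ Set.uIcc (g.eval a) (g.eval b) := by
    rw [Set.mem_uIcc]
    rcases lt_or_gt_of_ne ha with h1 | h1 <;> rcases lt_or_gt_of_ne hb with h2 | h2
    · nlinarith
    · left; constructor <;> linarith
    · right; constructor <;> linarith
    · nlinarith [mul_pos h1 h2]
  obtain ⟨u, hu, hu0⟩ := intermediate_value_uIcc hcont' h0
  rw [Set.uIcc_of_le hab] at hu
  exact hn u hu hu0

/-- MVT on the left -/
theorem ts_mvt_left (h : ℝ[X]) (z c : ℝ) (hzc : z < c)
    (hn : ∀ u, z < u → u ≤ c → h.derivative.eval u ≠ 0) :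
    0 < (h.eval c - h.eval z) * h.derivative.eval c := by
  obtain ⟨x, hx, e⟩ := exists_deriv_eq_slope (fun u => h.eval u) hzc (by fun_prop) (by fun_prop)
  rw [Polynomial.deriv] at e
  have := ts_const h.derivative x c hx.2.le (fun u hu => hn u (lt_of_lt_of_le hx.1 hu.1) hu.2)
  rw [eq_div_iff (by linarith)] at e
  rw [← e]
  have : 0 < c - z := by linarith
  nlinarith

theorem ts_mvt_right (h : ℝ[X]) (z c : ℝ) (hzc : c < z)
    (hn : ∀ u, c ≤ u → u < z → h.derivative.eval u ≠ 0) :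
    0 < (h.eval z - h.eval c) * h.derivative.eval c := by
  obtain ⟨x, hx, e⟩ := exists_deriv_eq_slope (fun u => h.eval u) hzc (by fun_prop) (by fun_prop)
  rw [Polynomial.deriv] at e
  have := ts_const h.derivative c x hx.1.le (fun u hu => hn u hu.1 (lt_of_le_of_lt hu.2 hx.2))
  rw [eq_div_iff (by linarith)] at e
  rw [← e]
  have : 0 < z - c := by linarith
  nlinarith

theorem ts_sign_mul {a b c d : ℝ} (h1 : SignType.sign a = SignType.sign c)
    (h2 : SignType.sign b = SignType.sign d) : SignType.sign (a * b) = SignType.sign (c * d) := by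
  rw [sign_mul, sign_mul, h1, h2]

theorem ts_sign_neg {a b : ℝ} (h : SignType.sign a = SignType.sign b) (hb : b < 0) : a < 0 := by
  rw [sign_neg hb] at h; exact sign_eq_neg_one_iff.1 h

theorem ts_sign_pos {a b : ℝ} (h : SignType.sign a = SignType.sign b) (hb : 0 < b) : 0 < a := by
  rw [sign_pos hb] at h; exact sign_eq_one_iff.1 h

theorem ts_sign_zero {a b : ℝ} (h : SignType.sign a = SignType.sign b) : a = 0 ↔ b = 0 := by
  rw [← sign_eq_zero_iff, h, sign_eq_zero_iff]

theorem ts_left (f h : ℝ[X]) (φ : ℝ ≃o ℝ) (Z : Finset ℝ)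
    (hZ : ∀ t, f.derivative.eval t = 0 → t ∈ Z)
    (hs : ∀ z ∈ Z, SignType.sign (f.eval z) = SignType.sign (h.eval (φ z)))
    (hd : ∀ t, SignType.sign (f.derivative.eval t) = SignType.sign (h.derivative.eval (φ t)))
    (hf : 0 < f.natDegree) (t : ℝ) (ht : t ∉ Z)
    (hle : h.eval (φ t) * h.derivative.eval (φ t) ≤ 0) :
    ∃ s < t, (∀ u ∈ Set.Icc s t, u ∉ Z) ∧ f.eval s * f.derivative.eval t < 0 := by
  by_cases hz : ∃ z ∈ Z, z < t
  · obtain ⟨z, hz, hmax⟩ := Finset.exists_max_image (Z.filter (· < t)) id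
      (by obtain ⟨z, h1, h2⟩ := hz; exact ⟨z, by simp [h1, h2]⟩)
    simp only [Finset.mem_filter, id, and_imp] at hz hmax
    have hfree : ∀ u, z < u → u ≤ t → u ∉ Z := by
      intro u h1 h2 h3
      rcases h2.lt_or_eq with h2 | h2
      · exact absurd (hmax u h3 h2) (not_le.2 h1)
      · exact ht (h2 ▸ h3)
    have := ts_mvt_left h (φ z) (φ t) (φ.lt_iff_lt.2 hz.2) (by
      intro u h1 h2 h3
      refine hfree (φ.symm u) (by rwa [φ.lt_symm_apply]) (by rwa [φ.symm_apply_le]) (hZ _ ?_)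
      rw [ts_sign_zero (hd _)]; simpa using h3)
    have h4 : f.eval z * f.derivative.eval t < 0 :=
      ts_sign_neg (ts_sign_mul (hs z hz.1) (hd t)) (by nlinarith)
    have hcont : Continuous (fun u => f.eval u * f.derivative.eval t) := by fun_prop
    have h5 : ∀ᶠ u in nhdsWithin z (Set.Ioi z), f.eval u * f.derivative.eval t < 0 :=
      nhdsWithin_le_nhds (hcont.continuousAt.eventually_lt continuousAt_const h4)
    obtain ⟨s, h6, h7⟩ := (h5.and (Ioo_mem_nhdsGT hz.2)).exists
    exact ⟨s, h7.2, fun u hu => hfree u (lt_of_lt_of_le h7.1 hu.1) hu.2, h6⟩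
  · push Not at hz
    obtain ⟨s, h1, h2⟩ := ts_atBot f hf t
    have hfree : ∀ u ∈ Set.Icc s t, u ∉ Z := by
      intro u hu h3
      have := hz u h3
      exact ht (le_antisymm this hu.2 ▸ h3)
    have := ts_const f.derivative s t h1.le (fun u hu h0 => hfree u hu (hZ u h0))
    refine ⟨s, h1, hfree, ?_⟩
    by_contra h8
    push Not at h8
    have h9 : 0 < f.derivative.eval s ^ 2 := by
      have : f.derivative.eval s ≠ 0 := left_ne_zero_of_mul this.ne'
      positivity
    nlinarith [mul_nonneg h8 this.le, mul_neg_of_neg_of_pos h2 (sq_pos_of_ne_zero (right_ne_zero_of_mul this.ne'))]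

theorem ts_right (f h : ℝ[X]) (φ : ℝ ≃o ℝ) (Z : Finset ℝ)
    (hZ : ∀ t, f.derivative.eval t = 0 → t ∈ Z)
    (hs : ∀ z ∈ Z, SignType.sign (f.eval z) = SignType.sign (h.eval (φ z)))
    (hd : ∀ t, SignType.sign (f.derivative.eval t) = SignType.sign (h.derivative.eval (φ t)))
    (hf : 0 < f.natDegree) (t : ℝ) (ht : t ∉ Z)
    (hle : 0 ≤ h.eval (φ t) * h.derivative.eval (φ t)) :
    ∃ s > t, (∀ u ∈ Set.Icc t s, u ∉ Z) ∧ 0 < f.eval s * f.derivative.eval t := by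
  by_cases hz : ∃ z ∈ Z, t < z
  · obtain ⟨z, hz, hmax⟩ := Finset.exists_min_image (Z.filter (t < ·)) id
      (by obtain ⟨z, h1, h2⟩ := hz; exact ⟨z, by simp [h1, h2]⟩)
    simp only [Finset.mem_filter, id, and_imp] at hz hmax
    have hfree : ∀ u, t ≤ u → u < z → u ∉ Z := by
      intro u h2 h1 h3
      rcases h2.lt_or_eq with h2 | h2
      · exact absurd (hmax u h3 h2) (not_le.2 h1)
      · exact ht (h2 ▸ h3)
    have := ts_mvt_right h (φ z) (φ t) (φ.lt_iff_lt.2 hz.2) (by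
      intro u h1 h2 h3
      refine hfree (φ.symm u) (by rwa [φ.le_symm_apply]) (by rwa [φ.symm_apply_lt]) (hZ _ ?_)
      rw [ts_sign_zero (hd _)]; simpa using h3)
    have h4 : 0 < f.eval z * f.derivative.eval t :=
      ts_sign_pos (ts_sign_mul (hs z hz.1) (hd t)) (by nlinarith)
    have hcont : Continuous (fun u => f.eval u * f.derivative.eval t) := by fun_prop
    have h5 : ∀ᶠ u in nhdsWithin z (Set.Iio z), 0 < f.eval u * f.derivative.eval t :=
      nhdsWithin_le_nhds (continuousAt_const.eventually_lt hcont.continuousAt h4)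
    obtain ⟨s, h6, h7⟩ := (h5.and (Ioo_mem_nhdsLT hz.2)).exists
    exact ⟨s, h7.1, fun u hu => hfree u hu.1 (lt_of_le_of_lt hu.2 h7.2), h6⟩
  · push Not at hz
    obtain ⟨s, h1, h2⟩ := ts_atTop f hf t
    have hfree : ∀ u ∈ Set.Icc t s, u ∉ Z := by
      intro u hu h3
      have := hz u h3
      exact ht (le_antisymm this hu.1 ▸ h3)
    have := ts_const f.derivative t s h1.le (fun u hu h0 => hfree u hu (hZ u h0))
    refine ⟨s, h1, hfree, ?_⟩
    by_contra h8
    push Not at h8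
    nlinarith [mul_nonneg (neg_nonneg.2 h8) this.le, mul_pos h2 (sq_pos_of_ne_zero (left_ne_zero_of_mul this.ne'))]

theorem ts_finish (f h : ℝ[X]) (φ : ℝ ≃o ℝ) (Z : Finset ℝ)
    (hZ : ∀ t, f.derivative.eval t = 0 → t ∈ Z)
    (hs : ∀ z ∈ Z, SignType.sign (f.eval z) = SignType.sign (h.eval (φ z)))
    (hd : ∀ t, SignType.sign (f.derivative.eval t) = SignType.sign (h.derivative.eval (φ t)))
    (hf : 0 < f.natDegree) (h0 : ∀ t, f.eval t = 0 → h.eval (φ t) = 0) (t : ℝ) :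
    SignType.sign (f.eval t) = SignType.sign (h.eval (φ t)) := by
  by_cases ht : t ∈ Z
  · exact hs t ht
  have hd1 : f.derivative.eval t ≠ 0 := fun h => ht (hZ t h)
  have key1 : h.eval (φ t) * h.derivative.eval (φ t) ≤ 0 → f.eval t * f.derivative.eval t ≤ 0 := by
    intro h1
    by_contra! h2
    obtain ⟨s, hst, hfree, h3⟩ := ts_left f h φ Z hZ hs hd hf t ht h1
    have : ∃ r ∈ Set.Icc s t, f.eval r = 0 := by
      by_contra! hc
      have := ts_const f s t hst.le hc
      nlinarith [mul_pos this (sq_pos_of_ne_zero hd1)]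
    obtain ⟨r, hr, hr0⟩ := this
    have hrt : r < t := by
      refine lt_of_le_of_ne hr.2 ?_
      rintro rfl; simp [hr0] at h2
    have := ts_mvt_left h (φ r) (φ t) (φ.lt_iff_lt.2 hrt) (by
      intro u h1 h2 h3
      have a1 : r < φ.symm u := by rwa [φ.lt_symm_apply]
      refine hfree (φ.symm u) ⟨by linarith [hr.1], by rwa [φ.symm_apply_le]⟩ (hZ _ ?_)
      rw [ts_sign_zero (hd _)]; simpa using h3)
    rw [h0 r hr0] at this
    linarith
  have key2 : 0 ≤ h.eval (φ t) * h.derivative.eval (φ t) → 0 ≤ f.eval t * f.derivative.eval t := by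
    intro h1
    by_contra! h2
    obtain ⟨s, hst, hfree, h3⟩ := ts_right f h φ Z hZ hs hd hf t ht h1
    have : ∃ r ∈ Set.Icc t s, f.eval r = 0 := by
      by_contra! hc
      have := ts_const f t s hst.le hc
      nlinarith [mul_pos this (sq_pos_of_ne_zero hd1)]
    obtain ⟨r, hr, hr0⟩ := this
    have hrt : t < r := by
      refine lt_of_le_of_ne hr.1 ?_
      rintro rfl; simp [hr0] at h2
    have := ts_mvt_right h (φ r) (φ t) (φ.lt_iff_lt.2 hrt) (by
      intro u h1 h2 h3
      have a1 : φ.symm u < r := by rwa [φ.symm_apply_lt]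
      refine hfree (φ.symm u) ⟨by rwa [φ.le_symm_apply], by linarith [hr.2]⟩ (hZ _ ?_)
      rw [ts_sign_zero (hd _)]; simpa using h3)
    rw [h0 r hr0] at this
    linarith
  have hdt := hd t
  have h0t := h0 t
  generalize f.eval t = a at *
  generalize f.derivative.eval t = b at *
  generalize h.eval (φ t) = c at *
  generalize h.derivative.eval (φ t) = d at *
  have hd2 : d ≠ 0 := fun h => hd1 ((ts_sign_zero hdt).2 h)
  rcases lt_trichotomy c 0 with hc | hc | hc
  · rw [sign_neg hc, sign_eq_neg_one_iff]
    have ha : a ≠ 0 := fun h => hc.ne (h0t h)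
    rcases lt_or_gt_of_ne hd2 with h | h
    · have := ts_sign_neg hdt h
      have := key2 (by nlinarith)
      rcases lt_or_gt_of_ne ha with h | h
      · exact h
      · nlinarith
    · have := ts_sign_pos hdt h
      have := key1 (by nlinarith)
      rcases lt_or_gt_of_ne ha with h | h
      · exact h
      · nlinarith
  · have h1 := key1 (by simp [hc])
    have h2 := key2 (by simp [hc])
    have : a * b = 0 := le_antisymm h1 h2
    have : a = 0 := by simpa [hd1] using this
    simp [this, hc]
  · rw [sign_pos hc, sign_eq_one_iff]
    have ha : a ≠ 0 := fun h => hc.ne' (h0t h)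
    rcases lt_or_gt_of_ne hd2 with h | h
    · have := ts_sign_neg hdt h
      have := key1 (by nlinarith)
      rcases lt_or_gt_of_ne ha with h | h
      · nlinarith
      · exact h
    · have := ts_sign_pos hdt h
      have := key2 (by nlinarith)
      rcases lt_or_gt_of_ne ha with h | h
      · nlinarith
      · exact h

theorem ts_sign_of_mul_pos {a b : ℝ} (h : 0 < a * b) : SignType.sign a = SignType.sign b := by
  rcases pos_and_pos_or_neg_and_neg_of_mul_pos h with ⟨h1, h2⟩ | ⟨h1, h2⟩
  · rw [sign_pos h1, sign_pos h2]
  · rw [sign_neg h1, sign_neg h2]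

def TsGood {κ : Type*} (P Q : κ → ℝ[X]) (f h : ℝ[X]) (Z : Finset ℝ) (φ : ℝ ≃o ℝ) : Prop :=
  (∀ k t, SignType.sign ((P k).eval t) = SignType.sign ((Q k).eval (φ t))) ∧
  ∀ z ∈ Z, SignType.sign (f.eval z) = SignType.sign (h.eval (φ z))

theorem ts_step {κ : Type*} (P Q : κ → ℝ[X]) (f h : ℝ[X]) (Z : Finset ℝ)
    (hZ : ∀ t, t ∈ Z ↔ ∃ k, P k ≠ 0 ∧ (P k).eval t = 0)
    (k0 : κ) (hPk : P k0 = f.derivative) (hQk : Q k0 = h.derivative)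
    (hf : 0 < f.natDegree) (hh : 0 < h.natDegree) (B : Finset ℝ) (r : ℝ)
    (hB : ∀ r' ∈ insert r B, f.eval r' = 0) (φ : ℝ ≃o ℝ) (hg : TsGood P Q f h Z φ)
    (hφB : ∀ r ∈ B, h.eval (φ r) = 0) :
    ∃ φ' : ℝ ≃o ℝ, TsGood P Q f h Z φ' ∧ ∀ r' ∈ insert r B, h.eval (φ' r') = 0 := by
  have hfr : f.eval r = 0 := hB r (Finset.mem_insert_self _ _)
  by_cases hrZ : r ∈ Z
  · refine ⟨φ, hg, ?_⟩
    intro r' hr'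
    rcases Finset.mem_insert.1 hr' with rfl | h1
    · exact (ts_sign_zero (hg.2 _ hrZ)).1 hfr
    · exact hφB r' h1
  have hf'0 : f.derivative ≠ 0 := by
    intro h0
    have := derivative_eq_zero.1 h0
    omega
  have hroot : ∀ k, Q k ≠ 0 → ∀ u, (Q k).eval u = 0 → φ.symm u ∈ Z := by
    intro k hk u hu
    rw [hZ]
    refine ⟨k, ?_, ?_⟩
    · intro hP
      apply hk
      apply Polynomial.funext
      intro s
      have := (ts_sign_zero (hg.1 k (φ.symm s))).1 (by simp [hP])
      simpa using this
    · rw [ts_sign_zero (hg.1 k _)]; simpa using hu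
  have hd : ∀ t, SignType.sign (f.derivative.eval t) = SignType.sign (h.derivative.eval (φ t)) := by
    intro t; rw [← hPk, ← hQk]; exact hg.1 k0 t
  have hh'0 : h.derivative ≠ 0 := by
    intro h0
    have := derivative_eq_zero.1 h0
    omega
  have hZ' : ∀ t, h.derivative.eval t = 0 → t ∈ Z.map φ.toEquiv.toEmbedding := by
    intro t ht
    rw [Finset.mem_map_equiv]
    exact hroot k0 (hQk ▸ hh'0) t (hQk ▸ ht)
  have hs' : ∀ z ∈ Z.map φ.toEquiv.toEmbedding,
      SignType.sign (h.eval z) = SignType.sign (f.eval (φ.symm z)) := by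
    intro z hz
    rw [Finset.mem_map_equiv] at hz
    have := hg.2 (φ.symm z) hz
    rw [OrderIso.apply_symm_apply] at this
    exact this.symm
  have hd' : ∀ t, SignType.sign (h.derivative.eval t)
      = SignType.sign (f.derivative.eval (φ.symm t)) := by
    intro t; rw [hd]; simp
  have hr' : φ r ∉ Z.map φ.toEquiv.toEmbedding := by
    rw [Finset.mem_map_equiv]; simpa using hrZ
  obtain ⟨a, ha, hafree, hal⟩ := ts_left h f φ.symm _ hZ' hs' hd' hh (φ r) hr' (by simp [hfr])
  obtain ⟨b, hb, hbfree, hbl⟩ := ts_right h f φ.symm _ hZ' hs' hd' hh (φ r) hr' (by simp [hfr])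
  have hfree : ∀ u ∈ Set.Icc a b, φ.symm u ∉ Z := by
    intro u hu
    rcases le_total u (φ r) with h1 | h1
    · simpa [Finset.mem_map_equiv] using hafree u ⟨hu.1, h1⟩
    · simpa [Finset.mem_map_equiv] using hbfree u ⟨h1, hu.2⟩
  have hQfree : ∀ k, Q k ≠ 0 → ∀ u ∈ Set.Icc a b, (Q k).eval u ≠ 0 :=
    fun k hk u hu h0 => hfree u hu (hroot k hk u h0)
  have hρ : ∃ ρ ∈ Set.Icc a b, h.eval ρ = 0 := by
    by_contra! hc
    have h1 := ts_const h a b (by linarith) hc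
    have h2 : 0 < (h.derivative.eval (φ r)) ^ 2 := sq_pos_of_ne_zero (right_ne_zero_of_mul hal.ne)
    nlinarith [mul_pos h1 h2, mul_pos (neg_pos.2 hal) hbl]
  obtain ⟨ρ, hρ, hρ0⟩ := hρ
  have haρ : a < ρ := lt_of_le_of_ne hρ.1 (by rintro rfl; simp [hρ0] at hal)
  have hρb : ρ < b := lt_of_le_of_ne hρ.2 (by rintro rfl; simp [hρ0] at hbl)
  obtain ⟨ψ, hψ, hout⟩ := ts_move a b (φ r) ρ ha hb haρ hρb
  have hin : ∀ s, ψ s = s ∨ (s ∈ Set.Icc a b ∧ ψ s ∈ Set.Icc a b) := by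
    intro s
    by_cases h1 : s ≤ a
    · exact Or.inl (hout s (Or.inl h1))
    by_cases h2 : b ≤ s
    · exact Or.inl (hout s (Or.inr h2))
    push Not at h1 h2
    refine Or.inr ⟨⟨h1.le, h2.le⟩, ?_, ?_⟩
    · rw [← hout a (Or.inl le_rfl)]; exact ψ.monotone h1.le
    · rw [← hout b (Or.inr le_rfl)]; exact ψ.monotone h2.le
  refine ⟨φ.trans ψ, ⟨?_, ?_⟩, ?_⟩
  · intro k t
    rw [hg.1 k t]
    simp only [OrderIso.trans_apply]
    by_cases hk : Q k = 0
    · simp [hk]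
    rcases hin (φ t) with h1 | ⟨h1, h2⟩
    · rw [h1]
    · rcases le_total (φ t) (ψ (φ t)) with h3 | h3
      · exact ts_sign_of_mul_pos (ts_const _ _ _ h3 fun u hu =>
          hQfree k hk u ⟨h1.1.trans hu.1, hu.2.trans h2.2⟩)
      · exact (ts_sign_of_mul_pos (ts_const _ _ _ h3 fun u hu =>
          hQfree k hk u ⟨h2.1.trans hu.1, hu.2.trans h1.2⟩)).symm
  · intro z hz
    rw [hg.2 z hz]
    simp only [OrderIso.trans_apply]
    rcases hin (φ z) with h1 | ⟨h1, h2⟩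
    · rw [h1]
    · exact absurd hz (by simpa using hfree _ h1)
  · intro r' hr'
    simp only [OrderIso.trans_apply]
    rcases Finset.mem_insert.1 hr' with rfl | h1
    · rw [hψ, hρ0]
    rcases hin (φ r') with h2 | ⟨h2, h3⟩
    · rw [h2]; exact hφB r' h1
    have hf'free : ∀ u, φ u ∈ Set.Icc a b → f.derivative.eval u ≠ 0 := by
      intro u hu h0
      have : u ∈ Z := (hZ u).2 ⟨k0, hPk ▸ hf'0, hPk ▸ h0⟩
      exact hfree _ hu (by simpa using this)
    have hfr' := hB r' hr'
    rcases lt_trichotomy r r' with h4 | h4 | h4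
    · have := ts_mvt_left f r r' h4 (fun u hu1 hu2 => hf'free u
        ⟨ha.le.trans (φ.monotone hu1.le), (φ.monotone hu2).trans h2.2⟩)
      simp [hfr, hfr'] at this
    · rw [← h4, hψ, hρ0]
    · have := ts_mvt_right f r r' h4 (fun u hu1 hu2 => hf'free u
        ⟨h2.1.trans (φ.monotone hu1), (φ.monotone hu2.le).trans hb.le⟩)
      simp [hfr, hfr'] at this

theorem ts_add {κ : Type*} (P Q : κ → ℝ[X]) (f h : ℝ[X]) (Z : Finset ℝ)
    (hZ : ∀ t, t ∈ Z ↔ ∃ k, P k ≠ 0 ∧ (P k).eval t = 0)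
    (k0 : κ) (hPk : P k0 = f.derivative) (hQk : Q k0 = h.derivative)
    (hf : 0 < f.natDegree) (hh : 0 < h.natDegree) (φ : ℝ ≃o ℝ) (hg : TsGood P Q f h Z φ) :
    ∃ φ' : ℝ ≃o ℝ,
      (∀ k t, SignType.sign ((P k).eval t) = SignType.sign ((Q k).eval (φ' t))) ∧
      ∀ t, SignType.sign (f.eval t) = SignType.sign (h.eval (φ' t)) := by
  have key : ∀ B : Finset ℝ, (∀ r ∈ B, f.eval r = 0) →
      ∃ φ' : ℝ ≃o ℝ, TsGood P Q f h Z φ' ∧ ∀ r' ∈ B, h.eval (φ' r') = 0 := by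
    intro B
    induction B using Finset.induction_on with
    | empty => intro _; exact ⟨φ, hg, by simp⟩
    | insert r B _ ih =>
      intro hB
      obtain ⟨φ1, h1, h2⟩ := ih fun r hr => hB r (Finset.mem_insert_of_mem hr)
      exact ts_step P Q f h Z hZ k0 hPk hQk hf hh B r hB φ1 h1 h2
  have hf0 : f ≠ 0 := by rintro rfl; simp at hf
  have hf'0 : f.derivative ≠ 0 := by
    intro h0
    have := derivative_eq_zero.1 h0
    omega
  obtain ⟨φ', h1, h2⟩ := key f.roots.toFinset (by
    intro r hr; simpa [hf0] using hr)
  refine ⟨φ', h1.1, ts_finish f h φ' Z ?_ h1.2 ?_ hf ?_⟩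
  · intro t ht; exact (hZ t).2 ⟨k0, hPk ▸ hf'0, hPk ▸ ht⟩
  · intro t; rw [← hPk, ← hQk]; exact h1.1 k0 t
  · intro t ht; exact h2 t (by simpa [hf0] using ht)

theorem ts_pseudo {R : Type*} [CommRing R] (g : R[X]) (j : ℕ) (hj : 0 < j) (hg : g.natDegree ≤ j) :
    ∀ (N : ℕ) (f : R[X]), f.natDegree ≤ N → ∃ (M : ℕ) (q r : R[X]),
      C (g.coeff j) ^ M * f = q * g + r ∧ r.natDegree < j := by
  intro N
  induction N with
  | zero => intro f hf; exact ⟨0, 0, f, by simp, by omega⟩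
  | succ N ih =>
    intro f hf
    by_cases hlt : f.natDegree < j
    · exact ⟨0, 0, f, by simp, hlt⟩
    by_cases hNj : N + 1 < j
    · omega
    push Not at hNj
    obtain ⟨M, q, r, e, hr⟩ := ih (C (g.coeff j) * f - C (f.coeff (N+1)) * X ^ (N + 1 - j) * g) (by
      rw [natDegree_le_iff_coeff_eq_zero]
      intro i hi
      rw [coeff_sub, coeff_C_mul, mul_assoc, coeff_C_mul, coeff_X_pow_mul']
      rw [if_pos (by omega)]
      rcases Nat.lt_or_ge (N+1) i with h1 | h1
      · rw [coeff_eq_zero_of_natDegree_lt (by omega : f.natDegree < i),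
          coeff_eq_zero_of_natDegree_lt (by omega : g.natDegree < i - (N + 1 - j))]
        simp
      · have : i = N + 1 := by omega
        subst this
        rw [show N + 1 - (N + 1 - j) = j by omega]
        ring)
    refine ⟨M + 1, q + C (g.coeff j) ^ M * (C (f.coeff (N+1)) * X ^ (N + 1 - j)), r, ?_, hr⟩
    linear_combination e

theorem ts_pseudo2 {R : Type*} [CommRing R] (g : R[X]) (j : ℕ) (hj : 0 < j) (hg : g.natDegree ≤ j)
    (f : R[X]) : ∃ (M : ℕ) (q r : R[X]),
      C (g.coeff j) ^ (2 * M) * f = q * g + r ∧ r.natDegree < j := by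
  obtain ⟨M, q, r, e, hr⟩ := ts_pseudo g j hj hg _ f le_rfl
  refine ⟨M, C (g.coeff j) ^ M * q, C (g.coeff j) ^ M * r, ?_, ?_⟩
  · linear_combination C (g.coeff j) ^ M * e
  · rw [← C_pow]; exact lt_of_le_of_lt (natDegree_C_mul_le _ _) hr

noncomputable def tsTrunc {R : Type*} [CommRing R] (j : ℕ) (g : R[X]) : R[X] :=
  ∑ i ∈ Finset.range (j + 1), monomial i (g.coeff i)

theorem tsTrunc_coeff {R : Type*} [CommRing R] (j : ℕ) (g : R[X]) (i : ℕ) :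
    (tsTrunc j g).coeff i = if i ≤ j then g.coeff i else 0 := by
  simp [tsTrunc, coeff_monomial]

theorem tsTrunc_natDegree {R : Type*} [CommRing R] (j : ℕ) (g : R[X]) :
    (tsTrunc j g).natDegree ≤ j := by
  rw [natDegree_le_iff_coeff_eq_zero]
  intro i hi
  rw [tsTrunc_coeff, if_neg (by omega)]

theorem ts_rem_exists {R : Type*} [CommRing R] (f g : R[X]) (j : ℕ) :
    ∃ r : R[X], 0 < j → (r.natDegree < j ∧ ∃ (M : ℕ) (q : R[X]),
      C (g.coeff j) ^ (2 * M) * f = q * tsTrunc j g + r) := by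
  by_cases hj : 0 < j
  · obtain ⟨M, q, r, e, hr⟩ := ts_pseudo2 (tsTrunc j g) j hj (tsTrunc_natDegree j g) f
    rw [tsTrunc_coeff, if_pos le_rfl] at e
    exact ⟨r, fun _ => ⟨hr, M, q, e⟩⟩
  · exact ⟨0, fun h => absurd h hj⟩

noncomputable def tsRem {R : Type*} [CommRing R] (f g : R[X]) (j : ℕ) : R[X] :=
  (ts_rem_exists f g j).choose

theorem tsRem_spec {R : Type*} [CommRing R] (f g : R[X]) (j : ℕ) (hj : 0 < j) :
    (tsRem f g j).natDegree < j ∧ ∃ (M : ℕ) (q : R[X]),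
      C (g.coeff j) ^ (2 * M) * f = q * tsTrunc j g + tsRem f g j :=
  (ts_rem_exists f g j).choose_spec hj

theorem tsRem_sign {R : Type*} [CommRing R] (f g : R[X]) (x : R →+* ℝ) (z : ℝ)
    (hne : g.map x ≠ 0) (hz : (g.map x).eval z = 0) :
    0 < (g.map x).natDegree ∧ SignType.sign ((f.map x).eval z) =
      SignType.sign (((tsRem f g (g.map x).natDegree).map x).eval z) := by
  set j := (g.map x).natDegree with hjdef
  have hj : 0 < j := by
    by_contra h0
    have h0 : j = 0 := by omega
    rw [eq_C_of_natDegree_eq_zero h0] at hz hne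
    rw [eval_C] at hz
    rw [hz] at hne
    simp at hne
  refine ⟨hj, ?_⟩
  obtain ⟨_, M, q, e⟩ := tsRem_spec f g j hj
  have ht : (tsTrunc j g).map x = g.map x := by
    ext i
    rw [coeff_map, tsTrunc_coeff, coeff_map]
    split_ifs with h
    · rfl
    · rw [map_zero]
      have : (g.map x).coeff i = 0 := coeff_eq_zero_of_natDegree_lt (by omega)
      rw [← coeff_map, this]
  have hc : x (g.coeff j) ≠ 0 := by
    rw [← coeff_map]
    exact leadingCoeff_ne_zero.2 hne
  have e2 := congrArg (fun w => (w.map x).eval z) e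
  simp only [Polynomial.map_mul, Polynomial.map_add, Polynomial.map_pow, map_C, ht, eval_mul,
    eval_add, eval_pow, eval_C, hz, mul_zero, zero_add] at e2
  have hp : 0 < x (g.coeff j) ^ (2 * M) := by rw [pow_mul]; positivity
  rw [← e2, sign_mul, sign_pos hp, one_mul]

def TsClaim {R : Type*} [CommRing R] (F : Finset R[X]) : Prop :=
  ∃ C : Finset R, ∀ x y : R →+* ℝ, (∀ c ∈ C, SignType.sign (x c) = SignType.sign (y c)) →
    ∃ φ : ℝ ≃o ℝ, ∀ f ∈ F, ∀ t,
      SignType.sign ((f.map x).eval t) = SignType.sign ((f.map y).eval (φ t))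

theorem TsClaim.mono {R : Type*} [CommRing R] {F G : Finset R[X]} (h : TsClaim G) (hFG : F ⊆ G) :
    TsClaim F := by
  obtain ⟨C, hC⟩ := h
  refine ⟨C, fun x y hxy => ?_⟩
  obtain ⟨φ, hφ⟩ := hC x y hxy
  exact ⟨φ, fun f hf => hφ f (hFG hf)⟩

theorem ts_natDegree_le {R : Type*} [CommRing R] (f : R[X]) (x y : R →+* ℝ)
    (h : ∀ i, SignType.sign (x (f.coeff i)) = SignType.sign (y (f.coeff i))) :
    (f.map x).natDegree ≤ (f.map y).natDegree := by
  rw [natDegree_le_iff_coeff_eq_zero]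
  intro i hi
  rw [coeff_map, ts_sign_zero (h i), ← coeff_map]
  exact coeff_eq_zero_of_natDegree_lt hi

theorem ts_natDegree_eq {R : Type*} [CommRing R] (f : R[X]) (x y : R →+* ℝ)
    (h : ∀ i, SignType.sign (x (f.coeff i)) = SignType.sign (y (f.coeff i))) :
    (f.map x).natDegree = (f.map y).natDegree :=
  le_antisymm (ts_natDegree_le f x y h) (ts_natDegree_le f y x fun i => (h i).symm)

open Classical in
theorem ts_main_step {R : Type*} [CommRing R] (m : ℕ) (T : Finset R[X])
    (f : R[X]) (hf : f.natDegree ≤ m + 1)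
    (hT : ∀ g ∈ T, g.natDegree ≤ m + 1)
    (ih : ∀ F : Finset R[X], (∀ g ∈ F, g.natDegree ≤ m) → TsClaim (T ∪ F))
    (F : Finset R[X]) (hF : ∀ g ∈ F, g.natDegree ≤ m) : TsClaim (insert f T ∪ F) := by
  set G : Finset R[X] := T ∪ F ∪ {derivative f} with hG
  have hGdeg : ∀ g ∈ G, g.natDegree ≤ m + 1 := by
    intro g hg
    simp only [hG, Finset.mem_union, Finset.mem_singleton] at hg
    rcases hg with (h | h) | rfl
    · exact hT g h
    · exact (hF g h).trans (by omega)
    · exact (natDegree_derivative_le f).trans (by omega)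
  set Rm : Finset R[X] := (G ×ˢ Finset.Icc 1 (m+1)).image (fun p => tsRem f p.1 p.2) with hRm
  obtain ⟨C1, hC1⟩ := ih (F ∪ {derivative f} ∪ Rm) (by
    intro g hg
    simp only [Finset.mem_union, Finset.mem_singleton, hRm, Finset.mem_image, Finset.mem_product,
      Finset.mem_Icc] at hg
    rcases hg with (h | rfl) | ⟨⟨g', j⟩, ⟨h1, h2⟩, rfl⟩
    · exact hF g h
    · exact (natDegree_derivative_le f).trans (by omega)
    · have := (tsRem_spec f g' j (by omega)).1
      simp only at h2 ⊢
      omega)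
  refine ⟨C1 ∪ (insert f G).biUnion (fun g => (Finset.range (m+2)).image g.coeff), ?_⟩
  intro x y hxy
  have hco : ∀ g ∈ insert f G, ∀ i, SignType.sign (x (g.coeff i)) = SignType.sign (y (g.coeff i)) := by
    intro g hg i
    by_cases hi : i < m + 2
    · apply hxy
      rw [Finset.mem_union, Finset.mem_biUnion]
      exact Or.inr ⟨g, hg, Finset.mem_image_of_mem _ (Finset.mem_range.2 hi)⟩
    · have : g.natDegree ≤ m + 1 := by
        rcases Finset.mem_insert.1 hg with rfl | h
        · exact hf
        · exact hGdeg g h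
      rw [coeff_eq_zero_of_natDegree_lt (by omega)]; simp
  obtain ⟨φ, hφ⟩ := hC1 x y fun c hc => hxy c (Finset.mem_union_left _ hc)
  have hdeg := ts_natDegree_eq f x y (hco f (Finset.mem_insert_self _ _))
  by_cases hd0 : (f.map x).natDegree = 0
  · refine ⟨φ, fun g hg t => ?_⟩
    by_cases hgf : g = f
    · subst hgf
      rw [eq_C_of_natDegree_eq_zero hd0, eq_C_of_natDegree_eq_zero (hdeg.symm.trans hd0)]
      simp only [eval_C, coeff_map]
      exact hco g (Finset.mem_insert_self _ _) 0
    · apply hφ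
      simp only [Finset.mem_union, Finset.mem_insert, hgf, false_or] at hg ⊢
      tauto
  have hdx : 0 < (f.map x).natDegree := by omega
  let P : {g // g ∈ G} → ℝ[X] := fun g => g.1.map x
  let Q : {g // g ∈ G} → ℝ[X] := fun g => g.1.map y
  let Z : Finset ℝ := G.biUnion (fun g => (g.map x).roots.toFinset)
  have hZ : ∀ t, t ∈ Z ↔ ∃ k, P k ≠ 0 ∧ (P k).eval t = 0 := by
    intro t
    simp [Z, P, and_left_comm]
  have hdG : derivative f ∈ G := by simp [hG]
  have hsub : ∀ g ∈ G, g ∈ T ∪ (F ∪ {derivative f} ∪ Rm) := by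
    intro g hg
    simp only [hG, Finset.mem_union] at hg ⊢
    tauto
  obtain ⟨φ', h1, h2⟩ := ts_add P Q (f.map x) (f.map y) Z hZ ⟨_, hdG⟩ (by simp [P, derivative_map])
    (by simp [Q, derivative_map]) hdx (hdeg ▸ hdx) φ ⟨fun k t => hφ k.1 (hsub k.1 k.2) t, by
      intro z hz
      obtain ⟨⟨g, hg⟩, hne, h0⟩ := (hZ z).1 hz
      simp only [P] at hne h0
      have hj := ts_natDegree_eq g x y (hco g (Finset.mem_insert_of_mem hg))
      obtain ⟨hj0, e1⟩ := tsRem_sign f g x z hne h0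
      have hney : g.map y ≠ 0 := by
        intro h; rw [h, natDegree_zero] at hj; omega
      obtain ⟨_, e2⟩ := tsRem_sign f g y (φ z) hney
        ((ts_sign_zero (hφ g (hsub g hg) z)).1 h0)
      rw [e1, e2, ← hj]
      apply hφ
      apply Finset.mem_union_right
      apply Finset.mem_union_right
      refine Finset.mem_image.2 ⟨(g, (g.map x).natDegree), ?_, rfl⟩
      rw [Finset.mem_product, Finset.mem_Icc]
      exact ⟨hg, hj0, natDegree_map_le.trans (hGdeg g hg)⟩⟩
  refine ⟨φ', fun g hg t => ?_⟩
  by_cases hgf : g = f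
  · subst hgf; exact h2 t
  · have : g ∈ G := by
      simp only [hG, Finset.mem_union, Finset.mem_insert, hgf, false_or] at hg ⊢
      tauto
    exact h1 ⟨g, this⟩ t

open Classical in
theorem ts_main_deg {R : Type*} [CommRing R] (m : ℕ) :
    ∀ F : Finset R[X], (∀ g ∈ F, g.natDegree ≤ m) → TsClaim F := by
  induction m with
  | zero =>
    intro F hF
    refine ⟨F.image (fun g => g.coeff 0), fun x y hxy => ⟨OrderIso.refl ℝ, fun f hf t => ?_⟩⟩
    rw [eq_C_of_natDegree_eq_zero (Nat.le_zero.1 (hF f hf))]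
    simpa using hxy _ (Finset.mem_image_of_mem _ hf)
  | succ m ih =>
    have key : ∀ T : Finset R[X], (∀ g ∈ T, g.natDegree ≤ m + 1) →
        ∀ F : Finset R[X], (∀ g ∈ F, g.natDegree ≤ m) → TsClaim (T ∪ F) := by
      intro T
      induction T using Finset.induction_on with
      | empty => intro _ F hF; simpa using ih F hF
      | insert f T _ ih2 =>
        intro hT F hF
        have hT' : ∀ g ∈ T, g.natDegree ≤ m + 1 := fun g hg => hT g (Finset.mem_insert_of_mem hg)
        exact ts_main_step m T f (hT f (Finset.mem_insert_self _ _)) hT' (ih2 hT') F hF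
    intro F hF
    simpa using key F hF ∅ (by simp)

theorem ts_main {R : Type*} [CommRing R] (F : Finset R[X]) : TsClaim F :=
  ts_main_deg (F.sup natDegree) F fun _ hg => Finset.le_sup (f := natDegree) hg

end tarski

/-- Working notion of semialgebraic set. -/
def SA {ι : Type} (S : Set (ι → ℝ)) : Prop :=
  ∃ C : Finset (MvPolynomial ι ℝ), ∀ x y : ι → ℝ,
    (∀ c ∈ C, SignType.sign (MvPolynomial.eval x c) = SignType.sign (MvPolynomial.eval y c)) →
      (x ∈ S → y ∈ S)

theorem SA.compl {ι : Type} {S : Set (ι → ℝ)} (h : SA S) : SA Sᶜ := by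
  obtain ⟨C, hC⟩ := h
  exact ⟨C, fun x y hxy hx hy => hx (hC y x (fun c hc => (hxy c hc).symm) hy)⟩

open Classical in
theorem SA.inter {ι : Type} {S T : Set (ι → ℝ)} (h : SA S) (h' : SA T) : SA (S ∩ T) := by
  obtain ⟨C, hC⟩ := h
  obtain ⟨C', hC'⟩ := h'
  exact ⟨C ∪ C', fun x y hxy hx =>
    ⟨hC x y (fun c hc => hxy c (Finset.mem_union_left _ hc)) hx.1,
     hC' x y (fun c hc => hxy c (Finset.mem_union_right _ hc)) hx.2⟩⟩

open Classical in
theorem SA.forall_finite {ι κ : Type} [Finite κ] {S : κ → Set (ι → ℝ)} (h : ∀ k, SA (S k)) :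
    SA {x | ∀ k, x ∈ S k} := by
  have := Fintype.ofFinite κ
  choose C hC using h
  refine ⟨Finset.univ.biUnion C, fun x y hxy hx k => hC k x y (fun c hc => hxy c ?_) (hx k)⟩
  exact Finset.mem_biUnion.2 ⟨k, Finset.mem_univ _, hc⟩

/-- polynomial functions -/
noncomputable def polyFun (ι : Type) : Subalgebra ℝ ((ι → ℝ) → ℝ) :=
  (AlgHom.pi (fun x : ι → ℝ => MvPolynomial.aeval x) :
    MvPolynomial ι ℝ →ₐ[ℝ] ((ι → ℝ) → ℝ)).range

theorem mem_polyFun {ι : Type} {f : (ι → ℝ) → ℝ} :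
    f ∈ polyFun ι ↔ ∃ p : MvPolynomial ι ℝ, ∀ x, MvPolynomial.eval x p = f x := by
  unfold polyFun
  rw [AlgHom.mem_range]
  constructor
  · rintro ⟨p, rfl⟩
    exact ⟨p, fun x => by simp [MvPolynomial.aeval_eq_eval]⟩
  · rintro ⟨p, hp⟩
    exact ⟨p, funext fun x => by simp [MvPolynomial.aeval_eq_eval, hp]⟩

theorem polyFun_coord {ι : Type} (i : ι) : (fun x : ι → ℝ => x i) ∈ polyFun ι :=
  mem_polyFun.2 ⟨MvPolynomial.X i, by simp⟩

theorem polyFun_const {ι : Type} (c : ℝ) : (fun _ : ι → ℝ => c) ∈ polyFun ι :=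
  mem_polyFun.2 ⟨MvPolynomial.C c, by simp⟩

theorem polyFun_add {ι : Type} {f g : (ι → ℝ) → ℝ} (hf : f ∈ polyFun ι) (hg : g ∈ polyFun ι) :
    (fun x => f x + g x) ∈ polyFun ι := add_mem hf hg

theorem polyFun_sub {ι : Type} {f g : (ι → ℝ) → ℝ} (hf : f ∈ polyFun ι) (hg : g ∈ polyFun ι) :
    (fun x => f x - g x) ∈ polyFun ι := sub_mem hf hg

theorem polyFun_mul {ι : Type} {f g : (ι → ℝ) → ℝ} (hf : f ∈ polyFun ι) (hg : g ∈ polyFun ι) :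
    (fun x => f x * g x) ∈ polyFun ι := mul_mem hf hg

theorem polyFun_pow {ι : Type} {f : (ι → ℝ) → ℝ} (hf : f ∈ polyFun ι) (n : ℕ) :
    (fun x => f x ^ n) ∈ polyFun ι := pow_mem hf n

theorem polyFun_sum {ι : Type} {κ : Type*} {s : Finset κ} {f : κ → (ι → ℝ) → ℝ}
    (hf : ∀ k, f k ∈ polyFun ι) : (fun x => ∑ k ∈ s, f k x) ∈ polyFun ι := by
  have := sum_mem (S := polyFun ι) (t := s) (f := f) fun k _ => hf k
  convert this using 1
  ext x; simp

theorem polyFun_prod {ι : Type} {κ : Type*} {s : Finset κ} {f : κ → (ι → ℝ) → ℝ}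
    (hf : ∀ k, f k ∈ polyFun ι) : (fun x => ∏ k ∈ s, f k x) ∈ polyFun ι := by
  have := prod_mem (S := polyFun ι) (t := s) (f := f) fun k _ => hf k
  convert this using 1
  ext x; simp

theorem polyFun_det {ι : Type} {κ : Type*} [Fintype κ] [DecidableEq κ]
    {M : (ι → ℝ) → Matrix κ κ ℝ} (hf : ∀ i j, (fun x => M x i j) ∈ polyFun ι) :
    (fun x => (M x).det) ∈ polyFun ι := by
  simp only [Matrix.det_apply']
  refine polyFun_sum fun σ => polyFun_mul (polyFun_const _) (polyFun_prod fun i => hf _ _)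

theorem polyFun_matmul {ι : Type} {α β γ : Type*} [Fintype β]
    {M : (ι → ℝ) → Matrix α β ℝ} {N : (ι → ℝ) → Matrix β γ ℝ}
    (hM : ∀ i j, (fun x => M x i j) ∈ polyFun ι) (hN : ∀ i j, (fun x => N x i j) ∈ polyFun ι)
    (i : α) (j : γ) : (fun x => (M x * N x) i j) ∈ polyFun ι := by
  simp only [Matrix.mul_apply]
  exact polyFun_sum fun k => polyFun_mul (hM _ _) (hN _ _)

theorem SA.pos {ι : Type} {f : (ι → ℝ) → ℝ} (hf : f ∈ polyFun ι) : SA {x | 0 < f x} := by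
  obtain ⟨p, hp⟩ := mem_polyFun.1 hf
  refine ⟨{p}, fun x y hxy hx => ?_⟩
  have := hxy p (by simp)
  rw [hp, hp] at this
  exact ts_sign_pos this.symm hx

theorem SA.nonneg {ι : Type} {f : (ι → ℝ) → ℝ} (hf : f ∈ polyFun ι) : SA {x | 0 ≤ f x} := by
  have := (SA.pos (polyFun_sub (polyFun_const 0) hf)).compl
  convert this using 1
  ext x; simp

theorem SA.eq {ι : Type} {f g : (ι → ℝ) → ℝ} (hf : f ∈ polyFun ι) (hg : g ∈ polyFun ι) :
    SA {x | f x = g x} := by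
  have := (SA.nonneg (polyFun_sub hf hg)).inter (SA.nonneg (polyFun_sub hg hf))
  convert this using 1
  ext x
  simp only [Set.mem_ofPred_eq, Set.mem_inter_iff, sub_nonneg]
  constructor
  · intro h; simp [h]
  · rintro ⟨h1, h2⟩; linarith

theorem SA.reindex {ι κ : Type} (e : κ → ι) {S : Set (κ → ℝ)} (h : SA S) :
    SA {x : ι → ℝ | (fun k => x (e k)) ∈ S} := by
  classical
  obtain ⟨C, hC⟩ := h
  refine ⟨C.image (MvPolynomial.rename e), fun x y hxy hx => hC _ _ (fun c hc => ?_) hx⟩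
  have := hxy _ (Finset.mem_image_of_mem _ hc)
  rw [MvPolynomial.eval_rename, MvPolynomial.eval_rename] at this
  exact this

theorem option_eval {ι : Type} (w : Option ι → ℝ) (c : MvPolynomial (Option ι) ℝ) :
    ((MvPolynomial.optionEquivLeft ℝ ι c).map (MvPolynomial.eval fun i => w (some i))).eval (w none)
      = MvPolynomial.eval w c := by
  induction c using MvPolynomial.induction_on with
  | C a => simp
  | add p q hp hq => simp [hp, hq]
  | mul_X p i hp =>
    rw [map_mul, Polynomial.map_mul, Polynomial.eval_mul, hp, map_mul]
    cases i <;> simp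

theorem SA.exists_one {ι : Type} {S : Set (Option ι → ℝ)} (h : SA S) :
    SA {x : ι → ℝ | ∃ w ∈ S, ∀ i, w (some i) = x i} := by
  classical
  obtain ⟨C, hC⟩ := h
  obtain ⟨D, hD⟩ := ts_main (C.image (MvPolynomial.optionEquivLeft ℝ ι))
  refine ⟨D, ?_⟩
  rintro x y hxy ⟨w, hw, hwx⟩
  obtain ⟨φ, hφ⟩ := hD (MvPolynomial.eval x) (MvPolynomial.eval y) hxy
  refine ⟨fun o => o.elim (φ (w none)) y, ?_, fun i => rfl⟩
  refine hC w _ (fun c hc => ?_) hw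
  have := hφ _ (Finset.mem_image_of_mem _ hc) (w none)
  rw [← option_eval w c, ← option_eval _ c]
  rw [show x = fun i => w (some i) from (funext hwx).symm] at this
  exact this

theorem SA.exists {κ : Type} [Finite κ] : ∀ {ι : Type} {S : Set (ι ⊕ κ → ℝ)}, SA S →
    SA {x : ι → ℝ | ∃ h : κ → ℝ, Sum.elim x h ∈ S} := by
  induction κ using Finite.induction_empty_option with
  | of_equiv e ih =>
    rename_i α β
    intro ι S hS
    have := ih (hS.reindex (Sum.map id e.symm))
    convert this using 1
    ext x
    constructor
    · rintro ⟨h, hh⟩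
      refine ⟨fun a => h (e a), ?_⟩
      show _ ∈ S
      convert hh using 1
      ext (i | i) <;> simp
    · rintro ⟨h, hh⟩
      refine ⟨fun a => h (e.symm a), ?_⟩
      change _ ∈ S at hh
      convert hh using 1
      ext (i | i) <;> simp
  | h_empty =>
    intro ι S hS
    have := hS.reindex (Sum.elim id PEmpty.elim : ι ⊕ PEmpty → ι)
    convert this using 1
    ext x
    have key : ∀ h : PEmpty → ℝ, Sum.elim x h = fun k => x (Sum.elim id PEmpty.elim k) := by
      intro h; ext (i | i)
      · rfl
      · exact i.elim
    constructor
    · rintro ⟨h, hh⟩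
      rw [key h] at hh; exact hh
    · intro hh
      refine ⟨PEmpty.elim, ?_⟩
      rw [key]; exact hh
  | h_option ih =>
    rename_i κ _
    intro ι S hS
    have h1 : SA {w : Option (ι ⊕ κ) → ℝ | (fun q : ι ⊕ Option κ =>
        w (q.elim (fun i => some (Sum.inl i)) (fun o => o.map Sum.inr))) ∈ S} :=
      hS.reindex (fun q : ι ⊕ Option κ => q.elim (fun i => some (Sum.inl i)) (fun o => o.map Sum.inr))
    have := ih h1.exists_one
    convert this using 1
    ext x
    constructor
    · rintro ⟨h, hh⟩
      refine ⟨fun a => h (some a), fun o => o.elim (h none) (Sum.elim x fun a => h (some a)), ?_, ?_⟩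
      · show _ ∈ S
        convert hh using 1
        ext (i | _ | i) <;> simp
      · intro i; rfl
    · rintro ⟨h, w, hw, hwx⟩
      refine ⟨fun o => o.elim (w none) h, ?_⟩
      change _ ∈ S at hw
      convert hw using 1
      ext (i | _ | i)
      · simpa using (hwx (Sum.inl i)).symm
      · simp
      · simpa using (hwx (Sum.inr i)).symm

theorem SA.exists' {ι κ : Type} [Finite κ] {Φ : (ι → ℝ) → (κ → ℝ) → Prop}
    (h : SA {w : ι ⊕ κ → ℝ | Φ (fun i => w (Sum.inl i)) (fun k => w (Sum.inr k))}) :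
    SA {x : ι → ℝ | ∃ h : κ → ℝ, Φ x h} := h.exists

theorem SA.forall' {ι κ : Type} [Finite κ] {Φ : (ι → ℝ) → (κ → ℝ) → Prop}
    (h : SA {w : ι ⊕ κ → ℝ | Φ (fun i => w (Sum.inl i)) (fun k => w (Sum.inr k))}) :
    SA {x : ι → ℝ | ∀ h : κ → ℝ, Φ x h} := by
  have := (SA.exists' (Φ := fun x k => ¬ Φ x k) h.compl).compl
  convert this using 1
  ext x
  simp

theorem SA.isSemialgebraic {ι : Type} [Fintype ι] {S : Set (ι → ℝ)} (h : SA S) :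
    IsSemialgebraic S := by
  classical
  obtain ⟨C, hC⟩ := h
  let pat : (ι → ℝ) → ({c // c ∈ C} → SignType) := fun x c => SignType.sign (MvPolynomial.eval x c.1)
  let Pt := {σ : {c // c ∈ C} → SignType // ∃ x ∈ S, pat x = σ}
  let eN := Fintype.equivFin Pt
  let eM := Fintype.equivFin {c // c ∈ C}
  refine ⟨Fintype.card Pt, Fintype.card {c // c ∈ C},
    fun t l => if (eN.symm t).1 (eM.symm l) = -1 then -(eM.symm l).1 else (eM.symm l).1,
    fun t l => decide ((eN.symm t).1 (eM.symm l) = 0), ?_⟩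
  ext x
  rw [Set.mem_iUnion]
  have key : ∀ t, (x ∈ {x : ι → ℝ | ∀ l : Fin (Fintype.card {c // c ∈ C}),
      if decide ((eN.symm t).1 (eM.symm l) = 0) = true then
        MvPolynomial.eval x (if (eN.symm t).1 (eM.symm l) = -1 then -(eM.symm l).1
          else (eM.symm l).1) = 0
      else 0 < MvPolynomial.eval x (if (eN.symm t).1 (eM.symm l) = -1 then -(eM.symm l).1
          else (eM.symm l).1)}) ↔ pat x = (eN.symm t).1 := by
    intro t
    rw [Set.mem_ofPred_eq, funext_iff, ← eM.symm.forall_congr_right]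
    refine forall_congr' fun l => ?_
    generalize (eN.symm t).1 (eM.symm l) = σ
    simp only [pat]
    cases σ
    · simp [SignType.zero_eq_zero, sign_eq_zero_iff]
    · simp [SignType.neg_eq_neg_one, sign_eq_neg_one_iff]
    · simp [SignType.pos_eq_one, sign_eq_one_iff]
  simp only [key]
  constructor
  · intro hx
    exact ⟨eN ⟨pat x, x, hx, rfl⟩, by simp⟩
  · rintro ⟨t, ht⟩
    obtain ⟨y, hy, hyt⟩ := (eN.symm t).2
    refine hC y x (fun c hc => ?_) hy
    exact congrFun (hyt.trans ht.symm) ⟨c, hc⟩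

section capacity

open scoped MatrixOrder

theorem posDef_exists_sq {κ : Type} [Fintype κ] [DecidableEq κ] {Y : Matrix κ κ ℝ}
    (hY : Y.PosDef) : ∃ h : Matrix κ κ ℝ, h.det ≠ 0 ∧ Y = hᵀ * h := by
  classical
  have h0 := hY.posSemidef
  have hs : 0 ≤ Y := Matrix.nonneg_iff_posSemidef.mpr h0
  have h1 : CFC.sqrt Y * CFC.sqrt Y = Y := CFC.sqrt_mul_sqrt_self Y hs
  have h2 : (CFC.sqrt Y)ᵀ = CFC.sqrt Y := by
    have : (CFC.sqrt Y).PosSemidef := Matrix.nonneg_iff_posSemidef.mp (CFC.sqrt_nonneg Y)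
    have h3 := this.isHermitian
    rwa [Matrix.IsHermitian, conjTranspose_eq_transpose_of_trivial] at h3
  refine ⟨CFC.sqrt Y, ?_, ?_⟩
  · intro h
    have := congrArg Matrix.det h1
    rw [det_mul, h, zero_mul] at this
    exact hY.det_pos.ne this
  · rw [h2, h1]

theorem posDef_exists_normalizer {κ : Type} [Fintype κ] [DecidableEq κ] {Y : Matrix κ κ ℝ}
    (hY : Y.PosDef) : ∃ g : Matrix κ κ ℝ, g.det ≠ 0 ∧ gᵀ * Y * g = 1 := by
  obtain ⟨h, hd, rfl⟩ := posDef_exists_sq hY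
  have hu : IsUnit h.det := isUnit_iff_ne_zero.mpr hd
  refine ⟨h⁻¹, ?_, ?_⟩
  · rw [Matrix.det_nonsing_inv, Ring.inverse_eq_inv']
    exact inv_ne_zero hd
  · have : h⁻¹ᵀ * hᵀ = 1 := by
      rw [← Matrix.transpose_mul, Matrix.mul_nonsing_inv _ hu, Matrix.transpose_one]
    rw [← Matrix.mul_assoc, this, Matrix.one_mul, Matrix.mul_nonsing_inv _ hu]

theorem posDef_tm {κ : Type} [Fintype κ] [DecidableEq κ] {h Z : Matrix κ κ ℝ}
    (hd : h.det ≠ 0) (hZ : Z.PosDef) : (hᵀ * Z * h).PosDef := by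
  have h1 : (hᵀ * Z * h).PosSemidef := by
    have := hZ.posSemidef.conjTranspose_mul_mul_same h
    rwa [conjTranspose_eq_transpose_of_trivial] at this
  rw [h1.posDef_iff_det_ne_zero, det_mul, det_mul, det_transpose]
  exact mul_ne_zero (mul_ne_zero hd hZ.det_pos.ne') hd

variable {k m : ℕ} {d : Fin k → ℕ} {n : Fin m → ℕ} {A : Fin k → Fin m → ℕ}

/-- The matrices whose determinants enter the capacity functional. -/
noncomputable def QM (p : Fin m → ℝ)
    (V : ∀ i : Fin k, ∀ j : Fin m, Fin (A i j) → Matrix (Fin (n j)) (Fin (d i)) ℝ)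
    (Y : ∀ j : Fin m, Matrix (Fin (n j)) (Fin (n j)) ℝ) (i : Fin k) :
    Matrix (Fin (d i)) (Fin (d i)) ℝ :=
  ∑ j : Fin m, p j • ∑ a : Fin (A i j), (V i j a)ᵀ * Y j * V i j a

theorem capVal_eq (p : Fin m → ℝ)
    (V : ∀ i : Fin k, ∀ j : Fin m, Fin (A i j) → Matrix (Fin (n j)) (Fin (d i)) ℝ)
    (Y : ∀ j : Fin m, Matrix (Fin (n j)) (Fin (n j)) ℝ) :
    capVal p V Y = (∏ i, (QM p V Y i).det) / ∏ j, (Y j).det ^ (p j) := rfl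

theorem QM_posSemidef {p : Fin m → ℝ} (hp : ∀ j, 0 < p j)
    (V : ∀ i : Fin k, ∀ j : Fin m, Fin (A i j) → Matrix (Fin (n j)) (Fin (d i)) ℝ)
    {Y : ∀ j : Fin m, Matrix (Fin (n j)) (Fin (n j)) ℝ} (hY : ∀ j, (Y j).PosSemidef)
    (i : Fin k) : (QM p V Y i).PosSemidef := by
  unfold QM
  refine Matrix.posSemidef_sum _ fun j _ => ?_
  refine Matrix.PosSemidef.smul ?_ (hp j).le
  refine Matrix.posSemidef_sum _ fun a _ => ?_
  have := (hY j).conjTranspose_mul_mul_same (V i j a)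
  rwa [conjTranspose_eq_transpose_of_trivial] at this

theorem den_pos (p : Fin m → ℝ)
    {Y : ∀ j : Fin m, Matrix (Fin (n j)) (Fin (n j)) ℝ} (hY : ∀ j, (Y j).PosDef) :
    0 < ∏ j, (Y j).det ^ (p j) :=
  Finset.prod_pos fun j _ => Real.rpow_pos_of_pos (hY j).det_pos _

theorem capVal_nonneg {p : Fin m → ℝ} (hp : ∀ j, 0 < p j)
    (V : ∀ i : Fin k, ∀ j : Fin m, Fin (A i j) → Matrix (Fin (n j)) (Fin (d i)) ℝ)
    {Y : ∀ j : Fin m, Matrix (Fin (n j)) (Fin (n j)) ℝ} (hY : ∀ j, (Y j).PosDef) :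
    0 ≤ capVal p V Y := by
  rw [capVal_eq]
  refine div_nonneg (Finset.prod_nonneg fun i _ => ?_) (den_pos p hY).le
  exact (QM_posSemidef hp V (fun j => (hY j).posSemidef) i).det_nonneg

theorem cap_le {p : Fin m → ℝ} (hp : ∀ j, 0 < p j)
    (V : ∀ i : Fin k, ∀ j : Fin m, Fin (A i j) → Matrix (Fin (n j)) (Fin (d i)) ℝ)
    {Y : ∀ j : Fin m, Matrix (Fin (n j)) (Fin (n j)) ℝ} (hY : ∀ j, (Y j).PosDef) :
    cap p V ≤ capVal p V Y := by
  refine csInf_le ⟨0, ?_⟩ ⟨Y, hY, rfl⟩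
  rintro r ⟨Z, hZ, rfl⟩
  exact capVal_nonneg hp V hZ

theorem le_cap {p : Fin m → ℝ}
    {V : ∀ i : Fin k, ∀ j : Fin m, Fin (A i j) → Matrix (Fin (n j)) (Fin (d i)) ℝ} {c : ℝ}
    (h : ∀ Y : ∀ j : Fin m, Matrix (Fin (n j)) (Fin (n j)) ℝ, (∀ j, (Y j).PosDef) →
      c ≤ capVal p V Y) : c ≤ cap p V := by
  refine le_csInf ⟨_, fun j => 1, fun j => Matrix.PosDef.one, rfl⟩ ?_
  rintro r ⟨Z, hZ, rfl⟩
  exact h Z hZ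

/-- The action of tuples of square matrices on data. -/
noncomputable def act (h : ∀ j : Fin m, Matrix (Fin (n j)) (Fin (n j)) ℝ)
    (V : ∀ i : Fin k, ∀ j : Fin m, Fin (A i j) → Matrix (Fin (n j)) (Fin (d i)) ℝ)
    (g : ∀ i : Fin k, Matrix (Fin (d i)) (Fin (d i)) ℝ) :
    ∀ i : Fin k, ∀ j : Fin m, Fin (A i j) → Matrix (Fin (n j)) (Fin (d i)) ℝ :=
  fun i j a => h j * V i j a * g i

theorem QM_act (p : Fin m → ℝ) (h : ∀ j : Fin m, Matrix (Fin (n j)) (Fin (n j)) ℝ)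
    (V : ∀ i : Fin k, ∀ j : Fin m, Fin (A i j) → Matrix (Fin (n j)) (Fin (d i)) ℝ)
    (g : ∀ i : Fin k, Matrix (Fin (d i)) (Fin (d i)) ℝ)
    (Z : ∀ j : Fin m, Matrix (Fin (n j)) (Fin (n j)) ℝ) (i : Fin k) :
    QM p (act h V g) Z i = (g i)ᵀ * QM p V (fun j => (h j)ᵀ * Z j * h j) i * g i := by
  unfold QM act
  simp only [Matrix.mul_sum, Matrix.sum_mul, Matrix.mul_smul, Matrix.smul_mul,
    Matrix.transpose_mul, Matrix.mul_assoc]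

theorem capVal_act (p : Fin m → ℝ) {h : ∀ j : Fin m, Matrix (Fin (n j)) (Fin (n j)) ℝ}
    (hh : ∀ j, (h j).det ≠ 0)
    (V : ∀ i : Fin k, ∀ j : Fin m, Fin (A i j) → Matrix (Fin (n j)) (Fin (d i)) ℝ)
    (g : ∀ i : Fin k, Matrix (Fin (d i)) (Fin (d i)) ℝ)
    {Z : ∀ j : Fin m, Matrix (Fin (n j)) (Fin (n j)) ℝ} (hZ : ∀ j, (Z j).PosDef) :
    capVal p (act h V g) Z = ((∏ i, (g i).det ^ 2) * ∏ j, ((h j).det ^ 2) ^ (p j)) *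
      capVal p V (fun j => (h j)ᵀ * Z j * h j) := by
  rw [capVal_eq, capVal_eq]
  have h1 : ∏ i, (QM p (act h V g) Z i).det =
      (∏ i, (g i).det ^ 2) * ∏ i, (QM p V (fun j => (h j)ᵀ * Z j * h j) i).det := by
    rw [← Finset.prod_mul_distrib]
    refine Finset.prod_congr rfl fun i _ => ?_
    rw [QM_act, det_mul, det_mul, det_transpose]; ring
  have h2 : ∏ j, ((h j)ᵀ * Z j * h j).det ^ (p j) =
      (∏ j, ((h j).det ^ 2) ^ (p j)) * ∏ j, (Z j).det ^ (p j) := by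
    rw [← Finset.prod_mul_distrib]
    refine Finset.prod_congr rfl fun j _ => ?_
    rw [← Real.mul_rpow (sq_nonneg _) (hZ j).det_pos.le, det_mul, det_mul, det_transpose]
    congr 1; ring
  have h3 : 0 < ∏ j, ((h j).det ^ 2) ^ (p j) :=
    Finset.prod_pos fun j _ => Real.rpow_pos_of_pos (by have := hh j; positivity) _
  have h4 := den_pos p hZ
  rw [h1, h2]
  field_simp

theorem cap_act {p : Fin m → ℝ} (hp : ∀ j, 0 < p j)
    {h : ∀ j : Fin m, Matrix (Fin (n j)) (Fin (n j)) ℝ}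
    (hh : ∀ j, (h j).det ≠ 0)
    (V : ∀ i : Fin k, ∀ j : Fin m, Fin (A i j) → Matrix (Fin (n j)) (Fin (d i)) ℝ)
    (g : ∀ i : Fin k, Matrix (Fin (d i)) (Fin (d i)) ℝ) :
    ((∏ i, (g i).det ^ 2) * ∏ j, ((h j).det ^ 2) ^ (p j)) * cap p V ≤ cap p (act h V g) := by
  refine le_cap fun Z hZ => ?_
  rw [capVal_act p hh V g hZ]
  refine mul_le_mul_of_nonneg_left (cap_le hp V fun j => posDef_tm (hh j) (hZ j)) ?_
  refine mul_nonneg (Finset.prod_nonneg fun i _ => sq_nonneg _) (Finset.prod_nonneg fun j _ => ?_)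
  exact Real.rpow_nonneg (sq_nonneg _) _

/-- Normalisation on the right. -/
theorem exists_right_normalizer {p : Fin m → ℝ} (hp : ∀ j, 0 < p j)
    {V : ∀ i : Fin k, ∀ j : Fin m, Fin (A i j) → Matrix (Fin (n j)) (Fin (d i)) ℝ}
    (hV : 0 < cap p V)
    {Y : ∀ j : Fin m, Matrix (Fin (n j)) (Fin (n j)) ℝ} (hY : ∀ j, (Y j).PosDef) :
    ∃ g : ∀ i : Fin k, Matrix (Fin (d i)) (Fin (d i)) ℝ,
      (∀ i, (g i).det ≠ 0) ∧ ∀ i, (g i)ᵀ * QM p V Y i * g i = 1 := by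
  have h1 : 0 < capVal p V Y := hV.trans_le (cap_le hp V hY)
  have h2 : ∀ i, (QM p V Y i).PosDef := by
    intro i
    rw [(QM_posSemidef hp V (fun j => (hY j).posSemidef) i).posDef_iff_det_ne_zero]
    intro h0
    rw [capVal_eq, Finset.prod_eq_zero (Finset.mem_univ i) h0, zero_div] at h1
    exact h1.false
  choose g hg hg' using fun i => posDef_exists_normalizer (h2 i)
  exact ⟨g, hg, hg'⟩

/-- Flatten a datum to a point of the coordinate space. -/
def ofDatum (V : ∀ i : Fin k, ∀ j : Fin m, Fin (A i j) → Matrix (Fin (n j)) (Fin (d i)) ℝ) :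
    QIdx k m d n A → ℝ := fun q => V q.1 q.2.1 q.2.2.1 q.2.2.2.1 q.2.2.2.2

theorem toDatum_ofDatum
    (V : ∀ i : Fin k, ∀ j : Fin m, Fin (A i j) → Matrix (Fin (n j)) (Fin (d i)) ℝ) :
    toDatum (ofDatum V) = V := rfl

theorem continuous_QM (p : Fin m → ℝ) (Y : ∀ j : Fin m, Matrix (Fin (n j)) (Fin (n j)) ℝ)
    (i : Fin k) :
    Continuous fun x : QIdx k m d n A → ℝ => QM p (toDatum x) Y i := by
  have h : ∀ (j : Fin m) (a : Fin (A i j)),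
      Continuous fun x : QIdx k m d n A → ℝ => toDatum x i j a := by
    intro j a
    refine continuous_matrix fun r c => ?_
    exact continuous_apply (⟨i, j, a, r, c⟩ : QIdx k m d n A)
  unfold QM
  refine continuous_finsetSum _ fun j _ => Continuous.fun_const_smul ?_ _
  refine continuous_finsetSum _ fun a _ => ?_
  exact ((h j a).matrix_transpose.matrix_mul continuous_const).matrix_mul (h j a)

theorem continuous_capVal (p : Fin m → ℝ) (Y : ∀ j : Fin m, Matrix (Fin (n j)) (Fin (n j)) ℝ) :
    Continuous fun x : QIdx k m d n A → ℝ => capVal p (toDatum x) Y := by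
  simp only [capVal_eq]
  refine Continuous.div_const ?_ _
  exact continuous_finsetProd _ fun i _ => (continuous_QM p Y i).matrix_det

theorem usc_cap {p : Fin m → ℝ} (hp : ∀ j, 0 < p j) :
    UpperSemicontinuous fun x : QIdx k m d n A → ℝ => cap p (toDatum x) := by
  intro x c hc
  obtain ⟨r, ⟨Y, hY, rfl⟩, hr⟩ := exists_lt_of_csInf_lt
    (⟨_, fun j => 1, fun j => Matrix.PosDef.one, rfl⟩ :
      { r : ℝ | ∃ Y : ∀ j : Fin m, Matrix (Fin (n j)) (Fin (n j)) ℝ,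
    (∀ j, (Y j).PosDef) ∧ r = capVal p (toDatum x) Y }.Nonempty) hc
  filter_upwards [(continuous_capVal p Y).continuousAt.eventually_lt_const hr] with y hy
  exact (cap_le hp _ hY).trans_lt hy

theorem isCompact_normalized {p : Fin m → ℝ} (hp : ∀ j, 0 < p j) :
    IsCompact {x : QIdx k m d n A → ℝ | ∀ i, QM p (toDatum x) (fun _ => 1) i = 1} := by
  refine Metric.isCompact_of_isClosed_isBounded ?_ ?_
  · have : {x : QIdx k m d n A → ℝ | ∀ i, QM p (toDatum x) (fun _ => 1) i = 1} =
        ⋂ i, {x | QM p (toDatum x) (fun _ => 1) i = 1} := by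
      ext x; simp
    rw [this]
    exact isClosed_iInter fun i => isClosed_eq (continuous_QM p _ i) continuous_const
  · have hsub : {x : QIdx k m d n A → ℝ | ∀ i, QM p (toDatum x) (fun _ => 1) i = 1} ⊆
        Set.pi Set.univ fun q => Metric.closedBall 0 (1 / p q.2.1 + 1) := by
      rintro x hx ⟨i, j, a, r, c⟩ -
      have h1 : QM p (toDatum x) (fun _ => 1) i c c = 1 := by
        have := hx i
        rw [this, Matrix.one_apply_eq]
      have h2 : QM p (toDatum x) (fun _ => 1) i c c =
          ∑ j, p j * ∑ a, ∑ r, (x ⟨i, j, a, r, c⟩) ^ 2 := by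
        simp only [QM, Matrix.sum_apply, Matrix.smul_apply, smul_eq_mul, Matrix.mul_one,
          Matrix.mul_apply, Matrix.transpose_apply, toDatum, Matrix.of_apply, sq]
      rw [h2] at h1
      have h3 : p j * ∑ a, ∑ r, (x ⟨i, j, a, r, c⟩) ^ 2 ≤ 1 := by
        rw [← h1]
        refine Finset.single_le_sum (f := fun j => p j * ∑ a, ∑ r, (x ⟨i, j, a, r, c⟩) ^ 2)
          (fun j' _ => ?_) (Finset.mem_univ j)
        have := hp j'
        positivity
      have h4 : (x ⟨i, j, a, r, c⟩) ^ 2 ≤ ∑ a, ∑ r, (x ⟨i, j, a, r, c⟩) ^ 2 := by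
        refine le_trans ?_ (Finset.single_le_sum (f := fun a => ∑ r, (x ⟨i, j, a, r, c⟩) ^ 2)
          (fun a' _ => by positivity) (Finset.mem_univ a))
        exact Finset.single_le_sum (f := fun r => (x ⟨i, j, a, r, c⟩) ^ 2)
          (fun a' _ => by positivity) (Finset.mem_univ r)
      have h5 : (x ⟨i, j, a, r, c⟩) ^ 2 ≤ 1 / p j := by
        rw [le_div_iff₀ (hp j)]
        nlinarith [hp j]
      rw [mem_closedBall_zero_iff, Real.norm_eq_abs]
      have h6 : 0 < 1 / p j := by have := hp j; positivity
      refine abs_le_of_sq_le_sq ?_ (by positivity)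
      nlinarith
    exact (Bornology.IsBounded.pi fun q => Metric.isBounded_closedBall).subset hsub

/-- A feasible datum yields a datum of capacity one attained at the identity. -/
theorem exists_unit_datum {p : Fin m → ℝ} (hp : ∀ j, 0 < p j)
    (hV : ∃ x : QIdx k m d n A → ℝ, 0 < cap p (toDatum x)) :
    ∃ x : QIdx k m d n A → ℝ, capVal p (toDatum x) (fun _ => 1) = 1 ∧
      ∀ Y : ∀ j : Fin m, Matrix (Fin (n j)) (Fin (n j)) ℝ, (∀ j, (Y j).PosDef) →
        1 ≤ capVal p (toDatum x) Y := by
  obtain ⟨x, hx⟩ := hV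
  have h1 : ∀ j : Fin m, (1 : Matrix (Fin (n j)) (Fin (n j)) ℝ).PosDef := fun j => .one
  have key : ∀ x : QIdx k m d n A → ℝ, 0 < cap p (toDatum x) →
      ∀ Y : ∀ j : Fin m, Matrix (Fin (n j)) (Fin (n j)) ℝ, (∀ j, (Y j).PosDef) →
      ∃ y : QIdx k m d n A → ℝ, (∀ i, QM p (toDatum y) (fun _ => 1) i = 1) ∧
        cap p (toDatum x) ≤ capVal p (toDatum x) Y * cap p (toDatum y) := by
    intro x hx Y hY
    obtain ⟨g, hg, hg'⟩ := exists_right_normalizer hp hx hY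
    choose h hh hY' using fun j => posDef_exists_sq (hY j)
    have e : (fun j => (h j)ᵀ * 1 * h j) = Y := by
      funext j; rw [Matrix.mul_one, ← hY' j]
    have hq : ∀ i, QM p (act h (toDatum x) g) (fun _ => 1) i = 1 := by
      intro i; rw [QM_act, e, hg' i]
    refine ⟨ofDatum (act h (toDatum x) g), fun i => ?_, ?_⟩
    · rw [toDatum_ofDatum]; exact hq i
    · rw [toDatum_ofDatum]
      have h2 := capVal_act p hh (toDatum x) g h1
      rw [e] at h2
      have h3 : capVal p (act h (toDatum x) g) (fun j => 1) = 1 := by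
        rw [capVal_eq]; simp [hq]
      rw [h3] at h2
      have h4 := cap_act hp hh (toDatum x) g
      have h5 := mul_le_mul_of_nonneg_left h4 (capVal_nonneg hp (toDatum x) hY)
      rw [← mul_assoc, mul_comm (capVal p (toDatum x) Y), ← h2, one_mul] at h5
      exact h5
  obtain ⟨y, hy, hxy⟩ := key x hx _ h1
  have hy0 : 0 < cap p (toDatum y) := by
    have h2 := hx.trans_le hxy
    exact pos_of_mul_pos_right h2 (capVal_nonneg hp _ h1)
  obtain ⟨w, hw, hmax⟩ := UpperSemicontinuousOn.exists_isMaxOn (s :=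
    {x : QIdx k m d n A → ℝ | ∀ i, QM p (toDatum x) (fun _ => 1) i = 1}) ⟨y, hy⟩
    (isCompact_normalized hp) ((usc_cap hp).upperSemicontinuousOn _)
  have hw0 : 0 < cap p (toDatum w) := hy0.trans_le (hmax hy)
  refine ⟨w, ?_, fun Y hY => ?_⟩
  · have hw' : ∀ i, QM p (toDatum w) (fun _ => 1) i = 1 := hw
    rw [capVal_eq]; simp [hw']
  · obtain ⟨z, hz, hwz⟩ := key w hw0 Y hY
    have h2 : cap p (toDatum z) ≤ cap p (toDatum w) := hmax hz
    have h3 := mul_le_mul_of_nonneg_left h2 (capVal_nonneg hp (toDatum w) hY)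
    have h4 := hwz.trans h3
    exact (le_mul_iff_one_le_left hw0).mp h4

theorem QM_scale (p : Fin m → ℝ) (t : ℝ) (x : QIdx k m d n A → ℝ)
    (Y : ∀ j : Fin m, Matrix (Fin (n j)) (Fin (n j)) ℝ) (i : Fin k) :
    QM p (toDatum fun q => t * x q) Y i = t ^ 2 • QM p (toDatum x) Y i := by
  have h : ∀ (j : Fin m) (a : Fin (A i j)),
      toDatum (fun q => t * x q) i j a = t • toDatum x i j a := fun j a => rfl
  simp only [QM, h, Finset.smul_sum, Matrix.transpose_smul, Matrix.smul_mul, Matrix.mul_smul,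
    smul_smul]
  refine Finset.sum_congr rfl fun j _ => Finset.sum_congr rfl fun a _ => ?_
  congr 1; ring

theorem capVal_scale (p : Fin m → ℝ) (t : ℝ) (x : QIdx k m d n A → ℝ)
    (Y : ∀ j : Fin m, Matrix (Fin (n j)) (Fin (n j)) ℝ) :
    capVal p (toDatum fun q => t * x q) Y = t ^ (2 * ∑ i, d i) * capVal p (toDatum x) Y := by
  rw [capVal_eq, capVal_eq]
  simp only [QM_scale, Matrix.det_smul, Finset.prod_mul_distrib, Fintype.card_fin]
  rw [Finset.prod_pow_eq_pow_sum, ← pow_mul, mul_div_assoc]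

theorem cap_scale {p : Fin m → ℝ} (hp : ∀ j, 0 < p j) {t : ℝ} (ht : 0 < t)
    {x : QIdx k m d n A → ℝ} (hx : capVal p (toDatum x) (fun _ => 1) = 1)
    (hx' : ∀ Y : ∀ j : Fin m, Matrix (Fin (n j)) (Fin (n j)) ℝ, (∀ j, (Y j).PosDef) →
        1 ≤ capVal p (toDatum x) Y) :
    cap p (toDatum fun q => t * x q) = t ^ (2 * ∑ i, d i) ∧
      Extremizable p (toDatum fun q => t * x q) := by
  have h1 : ∀ j : Fin m, (1 : Matrix (Fin (n j)) (Fin (n j)) ℝ).PosDef := fun j => .one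
  have h2 : capVal p (toDatum fun q => t * x q) (fun _ => 1) = t ^ (2 * ∑ i, d i) := by
    rw [capVal_scale, hx, mul_one]
  have h3 : cap p (toDatum fun q => t * x q) = t ^ (2 * ∑ i, d i) := by
    refine le_antisymm ?_ ?_
    · rw [← h2]; exact cap_le hp _ h1
    · refine le_cap fun Y hY => ?_
      rw [capVal_scale]
      exact le_mul_of_one_le_right (by positivity) (hx' Y hY)
  exact ⟨h3, by rw [h3]; positivity, _, h1, by rw [h2, h3]⟩

/-- The polynomial whose nonnegativity for all `H` encodes a lower bound on the capacity. -/
noncomputable def capPoly (p : Fin m → ℝ) (D q : ℕ) (a : Fin m → ℕ) (x : QIdx k m d n A → ℝ)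
    (t : ℝ) (H : (j : Fin m) × Fin (n j) × Fin (n j) → ℝ) : ℝ :=
  (∏ i, (QM p (toDatum x) (fun j => (Matrix.of fun r c => H ⟨j, r, c⟩)ᵀ *
    (Matrix.of fun r c => H ⟨j, r, c⟩)) i).det) ^ q -
  (t ^ D) ^ q * ∏ j, ((Matrix.of fun r c => H ⟨j, r, c⟩ :
    Matrix (Fin (n j)) (Fin (n j)) ℝ).det ^ 2) ^ (a j)

theorem capPoly_iff {p : Fin m → ℝ} (hp : ∀ j, 0 < p j) (D q : ℕ) (hq : 0 < q) (a : Fin m → ℕ)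
    (hqa : ∀ j, p j * q = a j) (x : QIdx k m d n A → ℝ) {t : ℝ} (ht : 0 < t) :
    (∀ H, 0 ≤ capPoly p D q a x t H) ↔ t ^ D ≤ cap p (toDatum x) := by
  have ha : ∀ j, a j ≠ 0 := by
    intro j h0
    have := hqa j
    rw [h0] at this
    have h1 : 0 < p j * q := mul_pos (hp j) (by exact_mod_cast hq)
    rw [this] at h1
    simp at h1
  have hrp : ∀ (j : Fin m) (s : ℝ), 0 ≤ s → (s ^ p j) ^ q = s ^ a j := by
    intro j s hs
    rw [← Real.rpow_natCast, ← Real.rpow_mul hs, hqa, Real.rpow_natCast]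
  have hnum : ∀ Y : ∀ j : Fin m, Matrix (Fin (n j)) (Fin (n j)) ℝ, (∀ j, (Y j).PosSemidef) →
      0 ≤ ∏ i, (QM p (toDatum x) Y i).det := fun Y hY =>
    Finset.prod_nonneg fun i _ => (QM_posSemidef hp _ hY i).det_nonneg
  have main : ∀ h : ∀ j : Fin m, Matrix (Fin (n j)) (Fin (n j)) ℝ, (∀ j, (h j).det ≠ 0) →
      ((t ^ D) ^ q * ∏ j, ((h j).det ^ 2) ^ (a j) ≤
        (∏ i, (QM p (toDatum x) (fun j => (h j)ᵀ * h j) i).det) ^ q ↔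
      t ^ D ≤ capVal p (toDatum x) (fun j => (h j)ᵀ * h j)) := by
    intro h hh
    have hY : ∀ j, ((h j)ᵀ * h j).PosDef := by
      intro j
      have := posDef_tm (hh j) (Matrix.PosDef.one (R := ℝ))
      rwa [Matrix.mul_one] at this
    rw [capVal_eq, le_div_iff₀ (den_pos p hY),
      ← pow_le_pow_iff_left₀ (mul_nonneg (by positivity) (den_pos p hY).le)
        (hnum _ fun j => (hY j).posSemidef) hq.ne', mul_pow,
      ← Finset.prod_pow Finset.univ q (fun j => ((h j)ᵀ * h j).det ^ p j)]
    have : ∀ j, (((h j)ᵀ * h j).det ^ p j) ^ q = ((h j).det ^ 2) ^ (a j) := by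
      intro j
      rw [hrp j _ (hY j).det_pos.le, det_mul, det_transpose, sq]
    simp only [this]
  constructor
  · intro hH
    refine le_cap fun Y hY => ?_
    choose h hh hY' using fun j => posDef_exists_sq (hY j)
    have e : Y = fun j => (h j)ᵀ * h j := funext hY'
    rw [e]
    refine (main h hh).mp ?_
    have := hH fun q => h q.1 q.2.1 q.2.2
    exact sub_nonneg.mp this
  · intro hc H
    by_cases hh : ∀ j, (Matrix.of fun r c => H ⟨j, r, c⟩ :
        Matrix (Fin (n j)) (Fin (n j)) ℝ).det ≠ 0
    · refine sub_nonneg.mpr ((main _ hh).mpr (hc.trans (cap_le hp _ ?_)))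
      intro j
      have := posDef_tm (hh j) (Matrix.PosDef.one (R := ℝ))
      rwa [Matrix.mul_one] at this
    · push Not at hh
      obtain ⟨j, hj⟩ := hh
      unfold capPoly
      rw [Finset.prod_eq_zero (i := j) (Finset.mem_univ j) (by rw [hj]; simp [ha j]), mul_zero,
        sub_zero]
      refine pow_nonneg (hnum _ fun j => ?_) _
      have := Matrix.posSemidef_conjTranspose_mul_self
        (Matrix.of fun r c => H ⟨j, r, c⟩ : Matrix (Fin (n j)) (Fin (n j)) ℝ)
      rwa [conjTranspose_eq_transpose_of_trivial] at this

end capacity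

section final

variable {k m : ℕ} {d : Fin k → ℕ} {n : Fin m → ℕ} {A : Fin k → Fin m → ℕ}

theorem polyFun_capPoly {ι : Type} (p : Fin m → ℝ) (D q : ℕ) (a : Fin m → ℕ)
    (e₁ : QIdx k m d n A → ι) (e₂ : ι) (e₃ : (j : Fin m) × Fin (n j) × Fin (n j) → ι) :
    (fun w : ι → ℝ => capPoly p D q a (fun i => w (e₁ i)) (w e₂) (fun i => w (e₃ i))) ∈
      polyFun ι := by
  unfold capPoly
  refine polyFun_sub (polyFun_pow (polyFun_prod fun i => polyFun_det fun r c => ?_) _)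
    (polyFun_mul (polyFun_pow (polyFun_pow (polyFun_coord _) _) _)
      (polyFun_prod fun j => polyFun_pow (polyFun_pow
        (polyFun_det fun r c => polyFun_coord _) _) _))
  simp only [QM, Matrix.sum_apply, Matrix.smul_apply, smul_eq_mul]
  refine polyFun_sum fun j => polyFun_mul (polyFun_const _) (polyFun_sum fun b => ?_)
  refine polyFun_matmul (fun r s => polyFun_matmul (fun r s => ?_) (fun r s => ?_) r s)
    (fun r s => ?_) r c
  · exact polyFun_coord _
  · exact polyFun_matmul (fun r s => polyFun_coord _) (fun r s => polyFun_coord _) r s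
  · exact polyFun_coord _

/-- The semialgebraic family. -/
def redFamily (p : Fin m → ℝ) (D q : ℕ) (a : Fin m → ℕ) (x₀ : QIdx k m d n A → ℝ) :
    Set ((QIdx k m d n A ⊕ QIdx k m d n A) → ℝ) :=
  {z | ∃ t : Unit → ℝ, 0 < t () ∧ (∀ i, z (Sum.inr i) = t () * x₀ i) ∧
    (∀ H, 0 ≤ capPoly p D q a (fun i => z (Sum.inl i)) (t ()) H) ∧
    ∀ t' : Unit → ℝ, ¬ (t () < t' () ∧
      ∀ H, 0 ≤ capPoly p D q a (fun i => z (Sum.inl i)) (t' ()) H)}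

theorem SA_capPoly {ι : Type} (p : Fin m → ℝ) (D q : ℕ) (a : Fin m → ℕ)
    (e₁ : QIdx k m d n A → ι) (e₂ : ι) :
    SA {w : ι → ℝ | ∀ H, 0 ≤ capPoly p D q a (fun i => w (e₁ i)) (w e₂) H} := by
  refine SA.forall' (Φ := fun w H => 0 ≤ capPoly p D q a (fun i => w (e₁ i)) (w e₂) H) ?_
  exact SA.nonneg (polyFun_capPoly p D q a (fun i => Sum.inl (e₁ i)) (Sum.inl e₂) Sum.inr)

theorem SA_redFamily (p : Fin m → ℝ) (D q : ℕ) (a : Fin m → ℕ) (x₀ : QIdx k m d n A → ℝ) :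
    SA (redFamily p D q a x₀) := by
  refine SA.exists' (Φ := fun z t => 0 < t () ∧ (∀ i, z (Sum.inr i) = t () * x₀ i) ∧
    (∀ H, 0 ≤ capPoly p D q a (fun i => z (Sum.inl i)) (t ()) H) ∧
    ∀ t' : Unit → ℝ, ¬ (t () < t' () ∧
      ∀ H, 0 ≤ capPoly p D q a (fun i => z (Sum.inl i)) (t' ()) H)) ?_
  refine SA.inter (SA.pos (polyFun_coord _)) (SA.inter (SA.forall_finite fun i =>
    SA.eq (polyFun_coord _) (polyFun_mul (polyFun_coord _) (polyFun_const _)))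
    (SA.inter (SA_capPoly p D q a (fun i => Sum.inl (Sum.inl i)) (Sum.inr ())) ?_))
  refine SA.forall' (Φ := fun w t' => ¬ (w (Sum.inr ()) < t' () ∧
      ∀ H, 0 ≤ capPoly p D q a (fun i => w (Sum.inl (Sum.inl i))) (t' ()) H)) ?_
  refine SA.compl (SA.inter ?_
    (SA_capPoly p D q a (fun i => Sum.inl (Sum.inl (Sum.inl i))) (Sum.inr ())))
  have h := SA.pos (polyFun_sub
    (polyFun_coord (Sum.inr () : ((QIdx k m d n A ⊕ QIdx k m d n A) ⊕ Unit) ⊕ Unit))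
    (polyFun_coord (Sum.inl (Sum.inr ()))))
  simp only [sub_pos] at h
  exact h

theorem mem_redFamily {p : Fin m → ℝ} (hp : ∀ j, 0 < p j) (D q : ℕ) (hD : 0 < D) (hq : 0 < q)
    (a : Fin m → ℕ) (hqa : ∀ j, p j * q = a j) (x₀ : QIdx k m d n A → ℝ)
    (z : (QIdx k m d n A ⊕ QIdx k m d n A) → ℝ) :
    z ∈ redFamily p D q a x₀ ↔ ∃ t : ℝ, 0 < t ∧ (∀ i, z (Sum.inr i) = t * x₀ i) ∧
      cap p (toDatum fun i => z (Sum.inl i)) = t ^ D := by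
  constructor
  · rintro ⟨t, ht, h1, h2, h3⟩
    refine ⟨t (), ht, h1, ?_⟩
    rw [capPoly_iff hp D q hq a hqa _ ht] at h2
    refine le_antisymm (not_lt.mp fun hlt => ?_) h2
    set c := cap p (toDatum fun i => z (Sum.inl i)) with hc
    have hc0 : 0 < c := (pow_pos ht D).trans hlt
    have hs : (c ^ ((D : ℝ)⁻¹)) ^ D = c := Real.rpow_inv_natCast_pow hc0.le hD.ne'
    have hs0 : 0 < c ^ ((D : ℝ)⁻¹) := Real.rpow_pos_of_pos hc0 _
    refine h3 (fun _ => c ^ ((D : ℝ)⁻¹)) ⟨?_, ?_⟩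
    · refine lt_of_pow_lt_pow_left₀ D hs0.le ?_
      rw [hs]; exact hlt
    · rw [capPoly_iff hp D q hq a hqa _ hs0, hs]
  · rintro ⟨t, ht, h1, h2⟩
    refine ⟨fun _ => t, ht, h1, ?_, ?_⟩
    · rw [capPoly_iff hp D q hq a hqa _ ht, h2]
    · rintro t' ⟨h3, h4⟩
      rw [capPoly_iff hp D q hq a hqa _ (ht.trans h3), h2] at h4
      exact absurd (pow_lt_pow_left₀ h3 ht.le hD.ne') (not_lt.mpr h4)

theorem exists_common_den (p : Fin m → ℚ) (hp : ∀ j, 0 < p j) :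
    ∃ q : ℕ, 0 < q ∧ ∃ a : Fin m → ℕ, ∀ j, (p j : ℝ) * q = a j := by
  refine ⟨∏ j, (p j).den, Finset.prod_pos fun j _ => (p j).den_pos,
    fun j => (p j).num.natAbs * ∏ i ∈ Finset.univ.erase j, (p i).den, fun j => ?_⟩
  rw [← Finset.mul_prod_erase Finset.univ _ (Finset.mem_univ j)]
  push_cast
  rw [← mul_assoc]
  congr 1
  have h1 : ((p j : ℚ) : ℝ) * ((p j).den : ℝ) = ((p j).num : ℝ) := by
    exact_mod_cast Rat.mul_den_eq_num (p j)
  have h2 : ((p j).num.natAbs : ℤ) = (p j).num :=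
    Int.natAbs_of_nonneg (Rat.num_pos.mpr (hp j)).le
  rw [h1]
  calc ((p j).num : ℝ) = (((p j).num.natAbs : ℤ) : ℝ) := by rw [h2]
    _ = _ := Int.cast_natCast _

end final

/-- Assume the weights are positive rationals. Then there exists a
semi-algebraic set `𝒴 ⊆ ℝ^{D₁} × ℝ^{D₁}` such that for every `(V, V') ∈ 𝒴` one has
`cap(V, p) = cap(V', p)` and `(V', p)` is extremizable, and such that the feasible set
`𝒮` equals `π₁(𝒴)`. -/
theorem exists_semialgebraic_reduction_family {k m : ℕ} (hk : 0 < k) (hm : 0 < m)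
    {d : Fin k → ℕ} {n : Fin m → ℕ} {A : Fin k → Fin m → ℕ} (p : Fin m → ℚ)
    (hd : ∀ i, 0 < d i) (hn : ∀ j, 0 < n j) (hp : ∀ j, 0 < p j)
    (hbal : ∑ i : Fin k, (d i : ℝ) = ∑ j : Fin m, (p j : ℝ) * (n j : ℝ)) :
    ∃ Y : Set ((QIdx k m d n A ⊕ QIdx k m d n A) → ℝ),
      IsSemialgebraic Y ∧
      (∀ z ∈ Y,
        cap (fun j => (p j : ℝ)) (toDatum fun q => z (Sum.inl q)) =
          cap (fun j => (p j : ℝ)) (toDatum fun q => z (Sum.inr q)) ∧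
        Extremizable (fun j => (p j : ℝ)) (toDatum fun q => z (Sum.inr q))) ∧
      { x : QIdx k m d n A → ℝ | 0 < cap (fun j => (p j : ℝ)) (toDatum x) } =
        (fun z (q : QIdx k m d n A) => z (Sum.inl q)) '' Y := by
  have hp' : ∀ j, 0 < (p j : ℝ) := fun j => by exact_mod_cast hp j
  by_cases hV : ∃ x : QIdx k m d n A → ℝ, 0 < cap (fun j => (p j : ℝ)) (toDatum x)
  · obtain ⟨x₀, hx, hx'⟩ := exists_unit_datum hp' hV
    obtain ⟨q, hq, a, hqa⟩ := exists_common_den p hp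
    have hD : 0 < 2 * ∑ i, d i := by
      have := Finset.sum_pos (s := Finset.univ) (f := d) (fun i _ => hd i) ⟨⟨0, hk⟩, by simp⟩
      omega
    have hmem := mem_redFamily hp' (2 * ∑ i, d i) q hD hq a hqa x₀
    refine ⟨redFamily (fun j => (p j : ℝ)) (2 * ∑ i, d i) q a x₀,
      (SA_redFamily _ _ q a x₀).isSemialgebraic, ?_, ?_⟩
    · intro z hz
      obtain ⟨t, ht, h1, h2⟩ := (hmem z).mp hz
      have h3 := cap_scale hp' ht hx hx'
      have e : (fun i => z (Sum.inr i)) = fun i => t * x₀ i := funext h1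
      rw [e, h2, h3.1]
      exact ⟨rfl, h3.2⟩
    · ext x
      constructor
      · intro h
        have h : 0 < cap (fun j => (p j : ℝ)) (toDatum x) := h
        set c := cap (fun j => (p j : ℝ)) (toDatum x) with hc
        have hs := Real.rpow_inv_natCast_pow h.le hD.ne'
        refine ⟨Sum.elim x fun i => c ^ (((2 * ∑ i, d i : ℕ) : ℝ)⁻¹) * x₀ i,
          (hmem _).mpr ⟨_, Real.rpow_pos_of_pos h (((2 * ∑ i, d i : ℕ) : ℝ)⁻¹),
            fun i => rfl, ?_⟩, rfl⟩
        rw [hs]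
        rfl
      · rintro ⟨z, hz, rfl⟩
        obtain ⟨t, ht, h1, h2⟩ := (hmem z).mp hz
        change 0 < cap _ _
        rw [h2]
        positivity
  · refine ⟨∅, ⟨0, 0, fun t => t.elim0, fun t => t.elim0, by simp⟩, by simp, ?_⟩
    rw [Set.image_empty]
    ext x
    constructor
    · intro h; exact absurd ⟨x, h⟩ hV
    · intro h; exact h.elim
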